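/- arXiv:math/0407064 — 2 statements merged into one kernel-verified Lean document; each statement's English description precedes it below -/
import Mathlib

section
/- Let f ∈ ℂ[x₁,…,x_{n+1}] be a strongly tame polynomial of weighted degree d with homogenization F, and let the monomials x^β, β ∈ I, be a ℂ-basis of V_g. Then for all but finitely many b ∈ ℂ, the monomials x₀^j·x^β with β ∈ I and 0 ≤ j ≤ d − 2 form a ℂ-basis of ℂ[x₀,x]/⟨∂F_b/∂x₀, ∂F_b/∂x₁, …, ∂F_b/∂x_{n+1}⟩, where F_b := F − b·x₀^d (i.e., one can take d_β = d − 1 for all β for a generic b). -/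
open MvPolynomial

noncomputable section

/-- The homogenization `F = Σ_{i=0}^d fᵢ·x₀^{d-i}` of `f`. -/
def homogenization (n d : ℕ) (α : Fin (n + 1) → ℕ)
    (f : MvPolynomial (Fin (n + 1)) ℂ) : MvPolynomial (Fin (n + 2)) ℂ :=
  ∑ i ∈ Finset.range (d + 1),
    rename Fin.succ (weightedHomogeneousComponent α i f) * X 0 ^ (d - i)

/-- The ideal generated by all partial derivatives of `F_b = F - b·x₀^d`. -/
def fullJacobianIdeal (n d : ℕ) (α : Fin (n + 1) → ℕ)
    (f : MvPolynomial (Fin (n + 1)) ℂ) (b : ℂ) : Ideal (MvPolynomial (Fin (n + 2)) ℂ) :=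
  Ideal.span (Set.range fun i : Fin (n + 2) =>
    pderiv i (homogenization n d α f - C b * X 0 ^ d))



def KExact {N : ℕ} {R : Type} [CommRing R] [Algebra ℂ R] (g : Fin N → R)
    (M : Type) [AddCommGroup M] [Module ℂ M] [Module R M] (q : ℕ) : Prop :=
  ∀ c : (Fin N → ℂ) [⋀^Fin (q+1)]→ₗ[ℂ] M,
    (∀ v : Fin q → (Fin N → ℂ), ∑ i, g i • c (Fin.cons (Pi.single i 1) v) = 0) →
    ∃ η : (Fin N → ℂ) [⋀^Fin (q+2)]→ₗ[ℂ] M,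
      ∀ v : Fin (q+1) → (Fin N → ℂ), ∑ i, g i • η (Fin.cons (Pi.single i 1) v) = c v

theorem kexact_top {N : ℕ} {R : Type} [CommRing R] [Algebra ℂ R] (g : Fin N → R)
    (M : Type) [AddCommGroup M] [Module ℂ M] [Module R M] (q : ℕ) (hq : N ≤ q) :
    KExact g M q := by
  intro c _
  refine ⟨0, fun v => ?_⟩
  have : c v = 0 := by
    apply AlternatingMap.map_linearDependent
    intro h
    have := h.fintype_card_le_finrank
    simp at this
    omega
  simp [this]

theorem kexact_step {N : ℕ} {R : Type} [CommRing R] [Algebra ℂ R] (g : Fin N → R)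
    {M M' : Type} [AddCommGroup M] [Module ℂ M] [Module R M] [IsScalarTower ℂ R M]
    [AddCommGroup M'] [Module ℂ M'] [Module R M'] [IsScalarTower ℂ R M']
    (π : M →ₗ[R] M') (hπ : Function.Surjective π) (y : R)
    (hy : ∀ m : M, y • m = 0 → m = 0)
    (hker : ∀ m : M, π m = 0 ↔ ∃ m', m = y • m')
    (a : Fin N → R) (ha : y = ∑ i, g i * a i) (q : ℕ) (h : KExact g M' (q+1)) :
    KExact g M q := by
  intro c hc
  have hsc : SMulCommClass ℂ R M := IsScalarTower.to_smulCommClass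
  -- the functional
  let A : (Fin N → ℂ) →ₗ[ℂ] R := Fintype.linearCombination ℂ a
  have hA : ∀ i, A (Pi.single i 1) = a i := fun i => by simp [A]
  let L : (Fin N → ℂ) →ₗ[ℂ] (Fin N → ℂ) [⋀^Fin (q+1)]→ₗ[ℂ] M :=
    { toFun := fun v => A v • c
      map_add' := fun v w => by simp [add_smul]
      map_smul' := fun r v => by
        ext w
        simp }
  let ω := AlternatingMap.alternatizeUncurryFin L
  have hω : ∀ v : Fin (q+1) → (Fin N → ℂ),
      ∑ i, g i • ω (Fin.cons (Pi.single i 1) v) = y • c v := by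
    intro v
    have key : ∀ i, ω (Fin.cons (Pi.single i 1) v) = a i • c v -
        ∑ k : Fin (q+1), (-1) ^ (k : ℕ) • A (v k) • c (Fin.cons (Pi.single i 1) (k.removeNth v)) := by
      intro i
      simp only [ω, AlternatingMap.alternatizeUncurryFin_apply]
      rw [Fin.sum_univ_succ, sub_eq_add_neg, ← Finset.sum_neg_distrib]
      congr 1
      · simp [L, hA]
      · refine Finset.sum_congr rfl fun k _ => ?_
        have : (k.succ.removeNth (Fin.cons (Pi.single i 1) v : Fin (q+2) → (Fin N → ℂ))) =
            Fin.cons (Pi.single i 1) (k.removeNth v) := by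
          funext j
          refine Fin.cases ?_ (fun j => ?_) j
          · simp [Fin.removeNth]
          · simp [Fin.removeNth]
        rw [this]
        simp [L, pow_succ]
    simp only [key, smul_sub, Finset.sum_sub_distrib, Finset.smul_sum]
    rw [Finset.sum_comm (s := Finset.univ) (t := Finset.univ) (f := fun (i : Fin N) (k : Fin (q+1)) => g i • (-1 : ℤ) ^ (k : ℕ) • A (v k) • c (Fin.cons (Pi.single i 1) (k.removeNth v)))]
    have : ∀ k : Fin (q+1), ∑ i, g i • (-1 : ℤ) ^ (k : ℕ) • A (v k) • c (Fin.cons (Pi.single i 1) (k.removeNth v)) = 0 := by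
      intro k
      have := hc (k.removeNth v)
      calc _ = (-1 : ℤ) ^ (k : ℕ) • A (v k) • ∑ i, g i • c (Fin.cons (Pi.single i 1) (k.removeNth v)) := by
            simp only [Finset.smul_sum]
            refine Finset.sum_congr rfl fun i _ => ?_
            rw [smul_comm (g i), smul_comm (g i)]
        _ = 0 := by rw [this]; simp
    rw [Finset.sum_eq_zero (fun k _ => this k), sub_zero, ha, Finset.sum_smul]
    simp [mul_smul]
  let πC : M →ₗ[ℂ] M' := π.restrictScalars ℂ
  obtain ⟨η', hη'⟩ := h (πC.compAlternatingMap ω) (by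
    intro v
    have := congrArg π (hω v)
    simp only [map_sum, map_smul] at this
    simp only [LinearMap.compAlternatingMap_apply, πC, LinearMap.coe_restrictScalars]
    rw [this, ← map_smul]
    exact (hker _).2 ⟨_, rfl⟩)
  obtain ⟨s, hs⟩ := πC.exists_rightInverse_of_surjective (LinearMap.range_eq_top.2 hπ)
  have hs' : ∀ m, π (s m) = m := fun m => LinearMap.congr_fun hs m
  let η := s.compAlternatingMap η'
  let Y : M →ₗ[ℂ] M := LinearMap.restrictScalars ℂ (LinearMap.lsmul R M y)
  have hYinj : LinearMap.ker Y = ⊥ := by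
    rw [LinearMap.ker_eq_bot']
    exact hy
  obtain ⟨t, ht⟩ := Y.exists_leftInverse_of_injective hYinj
  have ht' : ∀ m, t (y • m) = m := fun m => LinearMap.congr_fun ht m
  -- dη as alternating map
  let dη : (Fin N → ℂ) [⋀^Fin (q+2)]→ₗ[ℂ] M := ∑ i, g i • η.curryLeft (Pi.single i 1)
  have hdη : ∀ v, dη v = ∑ i, g i • η (Fin.cons (Pi.single i 1) v) := by
    intro v
    let evv : ((Fin N → ℂ) [⋀^Fin (q+2)]→ₗ[ℂ] M) →+ M :=
      ⟨⟨fun c => c v, rfl⟩, fun _ _ => rfl⟩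
    change evv dη = _
    rw [map_sum]
    rfl
  let ζ := t.compAlternatingMap (ω - dη)
  have hζ : ∀ v, y • ζ v = ω v - dη v := by
    intro v
    have : π (ω v - dη v) = 0 := by
      rw [map_sub, hdη, map_sum, sub_eq_zero]
      have := hη' v
      simp only [map_smul, η, LinearMap.compAlternatingMap_apply, hs']
      exact this.symm
    obtain ⟨m', hm'⟩ := (hker _).1 this
    simp only [ζ, LinearMap.compAlternatingMap_apply, AlternatingMap.sub_apply, hm', ht']
  refine ⟨ζ, fun v => ?_⟩
  rw [← sub_eq_zero]
  apply hy
  rw [smul_sub, Finset.smul_sum, ← hω v]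
  simp only [smul_comm y, hζ, smul_sub, Finset.sum_sub_distrib]
  have : ∑ i, g i • dη (Fin.cons (Pi.single i 1) v) = 0 := by
    simp only [hdη, Finset.smul_sum]
    have anti : ∀ i j, η (Fin.cons (Pi.single i 1) (Fin.cons (Pi.single j 1) v)) =
        - η (Fin.cons (Pi.single j 1) (Fin.cons (Pi.single i 1) v)) := by
      intro i j
      rw [← AlternatingMap.map_swap (i := 0) (j := 1) _ _ (by simp)]
      congr 1
      funext k
      refine Fin.cases ?_ (fun k => Fin.cases ?_ (fun k => ?_) k) k
      · simp
      · simp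
      · simp only [Function.comp_apply]
        rw [Equiv.swap_apply_of_ne_of_ne]
        · simp
        · simp
        · exact fun h => by have := congrArg Fin.val h; simp at this
    have : ∀ S : M, S = -S → S = 0 := fun S hS => by
      have h2 : (2 : ℂ) • S = 0 := by rw [two_smul]; nth_rw 2 [hS]; simp
      exact (smul_eq_zero.1 h2).resolve_left two_ne_zero
    apply this
    conv_lhs => rw [Finset.sum_comm]
    rw [← Finset.sum_neg_distrib]
    refine Finset.sum_congr rfl fun i _ => ?_
    rw [← Finset.sum_neg_distrib]
    refine Finset.sum_congr rfl fun j _ => ?_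
    rw [anti, smul_neg, smul_neg, smul_comm]
  rw [this]
  simp

theorem koszul_syzygy {N : ℕ} (g : Fin N → MvPolynomial (Fin N) ℂ) (m : Fin N → ℕ)
    (hm : ∀ i, (X i ^ m i : MvPolynomial (Fin N) ℂ) ∈ Ideal.span (Set.range g))
    (a : Fin N → MvPolynomial (Fin N) ℂ) (ha : ∑ i, a i * g i = 0) :
    ∃ h : Fin N → Fin N → MvPolynomial (Fin N) ℂ, (∀ i j, h i j = - h j i) ∧
      ∀ j, a j = ∑ i, g i * h i j := by
  let s : ℕ → Set (Fin N →₀ ℕ) := fun k => (fun i => Finsupp.single i (m i)) '' {i : Fin N | i.val < k}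
  let J : ℕ → Ideal (MvPolynomial (Fin N) ℂ) := fun k =>
    Ideal.span ((fun t => monomial t (1 : ℂ)) '' s k)
  have hJ : ∀ (k : ℕ) (hk : k < N) p, p ∈ J (k+1) ↔ ∃ u, ∃ z ∈ J k, p = u * X ⟨k, hk⟩ ^ m ⟨k, hk⟩ + z := by
    intro k hk p
    have : ((fun t => monomial t (1 : ℂ)) '' s (k+1)) =
        insert (X ⟨k, hk⟩ ^ m ⟨k, hk⟩) ((fun t => monomial t (1 : ℂ)) '' s k) := by
      have h1 : {i : Fin N | i.val < k+1} = insert ⟨k, hk⟩ {i : Fin N | i.val < k} := by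
        ext i
        simp [Fin.ext_iff]
        omega
      simp only [s, h1, Set.image_insert_eq, X_pow_eq_monomial]
    simp only [J, this, Ideal.mem_span_insert]
  have main : ∀ j k, j + k = N → KExact g (MvPolynomial (Fin N) ℂ ⧸ J k) k := by
    intro j
    induction j with
    | zero => intro k hk; exact kexact_top _ _ _ (by omega)
    | succ j ih =>
      intro k hk
      have hkN : k < N := by omega
      have hle : J k ≤ J (k+1) := by
        intro p hp
        rw [hJ k hkN]
        exact ⟨0, p, hp, by simp⟩
      obtain ⟨b, hb⟩ := (Ideal.mem_span_range_iff_exists_fun).1 (hm ⟨k, hkN⟩)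
      refine kexact_step g (M' := MvPolynomial (Fin N) ℂ ⧸ J (k+1))
        (Submodule.mapQ (J k) (J (k+1)) LinearMap.id hle) ?_ (X ⟨k, hkN⟩ ^ m ⟨k, hkN⟩) ?_ ?_ b
        (by rw [← hb]; simp [mul_comm]) k (ih (k+1) (by omega))
      · intro x
        obtain ⟨x, rfl⟩ := Submodule.Quotient.mk_surjective _ x
        exact ⟨Submodule.Quotient.mk x, rfl⟩
      · intro x hx
        obtain ⟨p, rfl⟩ := Submodule.Quotient.mk_surjective _ x
        rw [← Submodule.Quotient.mk_smul, Submodule.Quotient.mk_eq_zero, smul_eq_mul] at hx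
        rw [Submodule.Quotient.mk_eq_zero]
        simp only [J] at hx ⊢
        rw [mem_ideal_span_monomial_image] at hx ⊢
        intro t ht
        obtain ⟨_, ⟨i, hi, rfl⟩, hle⟩ := hx (Finsupp.single ⟨k, hkN⟩ (m ⟨k, hkN⟩) + t) (by
          rw [mem_support_iff] at ht ⊢
          rw [X_pow_eq_monomial, coeff_monomial_mul]
          simpa using ht)
        refine ⟨_, ⟨i, hi, rfl⟩, ?_⟩
        have hik : i ≠ ⟨k, hkN⟩ := by
          rintro rfl
          simp at hi
        simp only [Finsupp.single_le_iff, Finsupp.add_apply] at hle ⊢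
        rwa [Finsupp.single_eq_of_ne hik, zero_add] at hle
      · intro x
        obtain ⟨p, rfl⟩ := Submodule.Quotient.mk_surjective _ x
        rw [Submodule.mapQ_apply, Submodule.Quotient.mk_eq_zero, LinearMap.id_apply, hJ k hkN]
        constructor
        · rintro ⟨u, z, hz, rfl⟩
          refine ⟨Submodule.Quotient.mk u, ?_⟩
          rw [← Submodule.Quotient.mk_smul, Submodule.Quotient.eq]
          convert hz using 1
          simp [mul_comm]
        · rintro ⟨m', h⟩
          obtain ⟨u, rfl⟩ := Submodule.Quotient.mk_surjective _ m'
          rw [← Submodule.Quotient.mk_smul, Submodule.Quotient.eq] at h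
          exact ⟨u, _, h, by simp [mul_comm]⟩
  have h0 := main N 0 (by simp)
  have hJ0 : J 0 = ⊥ := by simp [J, s]
  let E := (Submodule.quotEquivOfEqBot (J 0) hJ0)
  let A : (Fin N → ℂ) →ₗ[ℂ] MvPolynomial (Fin N) ℂ := Fintype.linearCombination ℂ a
  have hA : ∀ i, A (Pi.single i 1) = a i := fun i => by simp [A]
  let c : (Fin N → ℂ) [⋀^Fin (0+1)]→ₗ[ℂ] (MvPolynomial (Fin N) ℂ ⧸ J 0) :=
    AlternatingMap.ofSubsingleton ℂ (Fin N → ℂ) _ (0 : Fin 1) ((E.symm.toLinearMap.restrictScalars ℂ) ∘ₗ A)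
  have hc : ∀ v, c v = E.symm (A (v 0)) := fun v => rfl
  obtain ⟨η, hη⟩ := h0 c (by
    intro v
    simp only [hc, Fin.cons_zero, hA, ← map_smul, ← map_sum, smul_eq_mul]
    rw [← map_zero E.symm, ← ha]
    simp [mul_comm])
  refine ⟨fun i j => E (η (Fin.cons (Pi.single i 1) (fun _ => Pi.single j 1))), ?_, ?_⟩
  · intro i j
    rw [← map_neg, ← AlternatingMap.map_swap (i := 0) (j := 1) _ _ (by simp)]
    change E _ = E _
    congr 2
    funext k
    fin_cases k
    · simp
    · simp
  · intro j
    have := congrArg E (hη (fun _ => Pi.single j 1))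
    rw [hc, LinearEquiv.apply_symm_apply, hA] at this
    rw [← this]
    simp

theorem lin_part {ι M : Type} [Fintype ι] [AddCommGroup M] [Module ℂ M]
    (e : Module.Basis (ι × ℕ) ℂ M) (δ : ι → ℕ) (r : ℕ) (T Q : M →ₗ[ℂ] M)
    (hT : ∀ i a, T (e (i, a)) = e (i, a + 1)) (hTQ : ∀ m, T (Q m) = Q (T m))
    (hQ : ∀ i a, Q (e (i, a)) ∈ Submodule.span ℂ (e '' {p | p.2 + δ p.1 = a + δ i + r})) :
    {c : ℂ | ¬ ((∀ m, Q m - c • (T ^ r) m ∈ Submodule.span ℂ (e '' {p | p.2 < r}) → m = 0) ∧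
      ∀ m, ∃ m', m - (Q m' - c • (T ^ r) m') ∈ Submodule.span ℂ (e '' {p | p.2 < r}))}.Finite := by
  classical
  let W : ℕ → Submodule ℂ M := fun k => Submodule.span ℂ (e '' {p | p.2 + δ p.1 = k})
  let U : ℕ → Submodule ℂ M := fun k => Submodule.span ℂ (e '' {p | p.2 + δ p.1 ≤ k})
  let Z : Submodule ℂ M := Submodule.span ℂ (e '' {p | p.2 < r})
  let π : M →ₗ[ℂ] M := e.constr ℂ (fun p => if r ≤ p.2 then e (p.1, p.2 - r) else 0)
  have hπe : ∀ i a, π (e (i, a)) = if r ≤ a then e (i, a - r) else 0 := by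
    intro i a; simp [π, e.constr_basis]
  have hTr : ∀ k i a, (T ^ k) (e (i, a)) = e (i, a + k) := by
    intro k
    induction k with
    | zero => simp
    | succ k ih => intro i a; rw [pow_succ', Module.End.mul_apply, ih, hT]; rfl
  have hπT : ∀ m, π ((T ^ r) m) = m := by
    intro m
    have : π ∘ₗ (T ^ r) = LinearMap.id := by
      apply e.ext
      rintro ⟨i, a⟩
      simp [hTr, hπe]
    exact LinearMap.congr_fun this m
  have hπZ : ∀ m ∈ Z, π m = 0 := by
    intro m hm
    have : Z ≤ LinearMap.ker π := by
      refine Submodule.span_le.2 ?_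
      rintro _ ⟨⟨i, a⟩, h, rfl⟩
      have h' : a < r := h
      simp [hπe]; omega
    exact this hm
  have hZ : ∀ m, m - (T ^ r) (π m) ∈ Z := by
    intro m
    have : (⊤ : Submodule ℂ M) ≤ Z.comap (LinearMap.id - (T ^ r) ∘ₗ π) := by
      rw [← e.span_eq]
      refine Submodule.span_le.2 ?_
      rintro _ ⟨⟨i, a⟩, rfl⟩
      simp only [Submodule.comap_coe, Set.mem_preimage, LinearMap.sub_apply, LinearMap.id_apply,
        LinearMap.comp_apply, hπe, SetLike.mem_coe]
      split_ifs with h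
      · rw [hTr, Nat.sub_add_cancel h]; simp
      · simp only [map_zero, sub_zero]
        exact Submodule.subset_span ⟨_, by simpa using h, rfl⟩
    exact this (Submodule.mem_top (x := m))
  have hQW : ∀ k, ∀ m ∈ W k, Q m ∈ W (k + r) := by
    intro k m hm
    have : W k ≤ (W (k + r)).comap Q := by
      refine Submodule.span_le.2 ?_
      rintro _ ⟨⟨i, a⟩, h, rfl⟩
      have h' : a + δ i = k := h
      have := hQ i a
      rw [h'] at this
      exact this
    exact this hm
  have hπW : ∀ k, ∀ m ∈ W (k + r), π m ∈ W k := by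
    intro k m hm
    have : W (k + r) ≤ (W k).comap π := by
      refine Submodule.span_le.2 ?_
      rintro _ ⟨⟨i, a⟩, h, rfl⟩
      have h' : a + δ i = k + r := h
      simp only [Submodule.comap_coe, Set.mem_preimage, hπe, SetLike.mem_coe]
      split_ifs with h2
      · exact Submodule.subset_span ⟨_, by simp; omega, rfl⟩
      · exact zero_mem _
    exact this hm
  let φ : M →ₗ[ℂ] M := π ∘ₗ Q
  have hφW : ∀ k, ∀ m ∈ W k, φ m ∈ W k := fun k m hm => hπW k _ (hQW k m hm)
  have hWU : ∀ j k, j ≤ k → W j ≤ U k := by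
    intro j k hjk
    refine Submodule.span_mono (Set.image_mono ?_)
    intro p hp
    simp only [Set.mem_ofPred_eq] at hp ⊢
    omega
  have hφU : ∀ k, ∀ m ∈ U k, φ m ∈ U k := by
    intro k m hm
    have : U k ≤ (U k).comap φ := by
      refine Submodule.span_le.2 ?_
      rintro _ ⟨⟨i, a⟩, h, rfl⟩
      have h' : a + δ i ≤ k := h
      exact hWU _ _ h' (hφW (a + δ i) _ (Submodule.subset_span ⟨_, rfl, rfl⟩))
    exact this hm
  have hfin : ∀ k, {p : ι × ℕ | p.2 + δ p.1 ≤ k}.Finite := by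
    intro k
    refine (Set.Finite.prod (Set.finite_univ (α := ι)) (Set.finite_Iic k)).subset ?_
    intro p hp
    simp only [Set.mem_ofPred_eq] at hp
    simp
    omega
  have hUfin : ∀ k, FiniteDimensional ℂ (U k) := fun k =>
    FiniteDimensional.span_of_finite ℂ ((hfin k).image _)
  have hWfin : ∀ k, FiniteDimensional ℂ (W k) := fun k =>
    Submodule.finiteDimensional_of_le (hWU k k le_rfl)
  obtain ⟨K, hK⟩ : ∃ K, ∀ i, δ i ≤ K := ⟨Finset.univ.sup δ, fun i => Finset.le_sup (Finset.mem_univ i)⟩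
  have hcomm : ∀ k, K ≤ k → ∀ m ∈ W k, φ (T m) = T (φ m) := by
    intro k hk m hm
    have : W (k + r) ≤ LinearMap.ker (π ∘ₗ T - T ∘ₗ π) := by
      refine Submodule.span_le.2 ?_
      rintro _ ⟨⟨i, a⟩, h, rfl⟩
      have h' : a + δ i = k + r := h
      have := hK i
      have h1 : r ≤ a := by omega
      have h2 : r ≤ a + 1 := by omega
      simp only [SetLike.mem_coe, LinearMap.mem_ker, LinearMap.sub_apply, LinearMap.comp_apply, hT,
        hπe, if_pos h1, if_pos h2]
      rw [show a + 1 - r = a - r + 1 by omega, sub_self]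
    have := this (hQW k m hm)
    simp only [LinearMap.mem_ker, LinearMap.sub_apply, LinearMap.comp_apply, sub_eq_zero] at this
    simp only [φ, LinearMap.comp_apply, ← hTQ]
    exact this
  have hTW : ∀ k, K ≤ k → W (k + 1) ≤ (W k).map T := by
    intro k hk
    refine Submodule.span_le.2 ?_
    rintro _ ⟨⟨i, a⟩, h, rfl⟩
    have h' : a + δ i = k + 1 := h
    have := hK i
    refine ⟨e (i, a - 1), Submodule.subset_span ⟨_, ?_, rfl⟩, ?_⟩
    · change a - 1 + δ i = k; omega
    · rw [hT, Nat.sub_add_cancel (by omega)]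
  refine (Module.End.finite_hasEigenvalue (φ.restrict (hφU K))).subset ?_
  intro c hc
  by_contra hne
  apply hc
  have hinjK : ∀ m ∈ U K, φ m = c • m → m = 0 := by
    intro m hm h
    by_contra h0
    refine hne (Module.End.hasEigenvalue_of_hasEigenvector (x := ⟨m, hm⟩) ⟨?_, ?_⟩)
    · rw [Module.End.mem_eigenspace_iff]
      ext
      exact h
    · simpa using h0
  let ψ : M →ₗ[ℂ] M := φ - c • LinearMap.id
  have hψ : ∀ m, ψ m = φ m - c • m := fun m => rfl
  have hψW : ∀ k, ∀ m ∈ W k, ψ m ∈ W k := fun k m hm =>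
    sub_mem (hφW k m hm) (Submodule.smul_mem _ _ hm)
  have hψU : ∀ k, ∀ m ∈ U k, ψ m ∈ U k := fun k m hm =>
    sub_mem (hφU k m hm) (Submodule.smul_mem _ _ hm)
  have hsurjW : ∀ k, ∀ m ∈ W k, ∃ m' ∈ W k, ψ m' = m := by
    have hlow : ∀ k, k ≤ K → ∀ m ∈ W k, ∃ m' ∈ W k, ψ m' = m := by
      intro k hk m hm
      have hi : Function.Injective (ψ.restrict (hψW k)) := by
        rw [← LinearMap.ker_eq_bot, LinearMap.ker_eq_bot']
        rintro ⟨x, hx⟩ h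
        have h' : ψ x = 0 := congrArg Subtype.val h
        ext
        exact hinjK x (hWU k K hk hx) (sub_eq_zero.1 h')
      obtain ⟨⟨m', hm'⟩, h⟩ := (LinearMap.injective_iff_surjective.1 hi) ⟨m, hm⟩
      exact ⟨m', hm', congrArg Subtype.val h⟩
    intro k
    rcases le_total k K with h | h
    · exact hlow k h
    · induction k, h using Nat.le_induction with
      | base => exact hlow K le_rfl
      | succ k hk ih =>
        intro m hm
        obtain ⟨n, hn, rfl⟩ := hTW k hk hm
        obtain ⟨n', hn', rfl⟩ := ih n hn
        refine ⟨T n', ?_, ?_⟩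
        · have : W k ≤ (W (k+1)).comap T := by
            refine Submodule.span_le.2 ?_
            rintro _ ⟨⟨i, a⟩, h, rfl⟩
            have h' : a + δ i = k := h
            simp only [Submodule.comap_coe, Set.mem_preimage, hT, SetLike.mem_coe]
            exact Submodule.subset_span ⟨_, by simp; omega, rfl⟩
          exact this hn'
        · rw [hψ, hψ, hcomm k hk n' hn', map_sub, map_smul]
  have hsurjU : ∀ k, ∀ m ∈ U k, ∃ m' ∈ U k, ψ m' = m := by
    intro k m hm
    have : U k ≤ (U k).map ψ := by
      refine Submodule.span_le.2 ?_
      rintro _ ⟨⟨i, a⟩, h, rfl⟩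
      have h' : a + δ i ≤ k := h
      obtain ⟨m', h1, h2⟩ := hsurjW (a + δ i) (e (i, a)) (Submodule.subset_span ⟨_, rfl, rfl⟩)
      exact ⟨m', hWU _ _ h' h1, h2⟩
    exact this hm
  have hex : ∀ m, ∃ k, m ∈ U k := by
    intro m
    have hm : m ∈ Submodule.span ℂ (Set.range e) := by rw [e.span_eq]; trivial
    have hUm : ∀ j k, j ≤ k → U j ≤ U k := by
      intro j k hjk
      refine Submodule.span_mono (Set.image_mono ?_)
      intro p hp
      simp only [Set.mem_ofPred_eq] at hp ⊢
      omega
    induction hm using Submodule.span_induction with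
    | mem x h =>
      obtain ⟨⟨i, a⟩, rfl⟩ := h
      exact ⟨a + δ i, Submodule.subset_span ⟨_, le_refl (a + δ i), rfl⟩⟩
    | zero => exact ⟨0, zero_mem _⟩
    | add x y _ _ hx hy =>
      obtain ⟨j, hj⟩ := hx
      obtain ⟨k, hk⟩ := hy
      exact ⟨max j k, add_mem (hUm _ _ (le_max_left _ _) hj) (hUm _ _ (le_max_right _ _) hk)⟩
    | smul t x _ hx =>
      obtain ⟨j, hj⟩ := hx
      exact ⟨j, Submodule.smul_mem _ _ hj⟩
  have hinj : ∀ m, ψ m = 0 → m = 0 := by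
    intro m hm
    obtain ⟨k, hk⟩ := hex m
    have hs : Function.Surjective (ψ.restrict (hψU k)) := by
      rintro ⟨x, hx⟩
      obtain ⟨m', h1, h2⟩ := hsurjU k x hx
      exact ⟨⟨m', h1⟩, Subtype.ext h2⟩
    have hi := LinearMap.injective_iff_surjective.2 hs
    have : (⟨m, hk⟩ : U k) = 0 := hi (by rw [map_zero]; exact Subtype.ext hm)
    exact congrArg Subtype.val this
  have hπP : ∀ m, π (Q m - c • (T ^ r) m) = ψ m := by
    intro m
    rw [map_sub, map_smul, hπT, hψ]; rfl
  refine ⟨fun m hm => hinj m ?_, fun m => ?_⟩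
  · rw [← hπP]; exact hπZ _ hm
  · obtain ⟨k, hk⟩ := hex (π m)
    obtain ⟨m', -, h⟩ := hsurjU k _ hk
    refine ⟨m', ?_⟩
    have := hZ (m - (Q m' - c • (T ^ r) m'))
    rwa [map_sub π, hπP, h, sub_self, map_zero, sub_zero] at this

/-- restriction to `x₀ = 0` -/
def ev0 (n : ℕ) : MvPolynomial (Fin (n + 2)) ℂ →ₐ[ℂ] MvPolynomial (Fin (n + 1)) ℂ :=
  aeval (Fin.cons 0 X)

theorem ev0_X0 (n : ℕ) : ev0 n (X 0) = 0 := by simp [ev0]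

theorem ev0_rename (n : ℕ) (p : MvPolynomial (Fin (n + 1)) ℂ) :
    ev0 n (rename Fin.succ p) = p := by
  rw [ev0, aeval_rename]
  have : (Fin.cons 0 X : Fin (n+2) → MvPolynomial (Fin (n + 1)) ℂ) ∘ Fin.succ = X := by
    funext i; simp
  rw [this]; simp

theorem ev0_eq_zero (n : ℕ) (p : MvPolynomial (Fin (n + 2)) ℂ) (hp : ev0 n p = 0) :
    ∃ q, p = X 0 * q := by
  have h : (Ideal.Quotient.mkₐ ℂ (Ideal.span {(X 0 : MvPolynomial (Fin (n + 2)) ℂ)})) =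
      ((Ideal.Quotient.mkₐ ℂ (Ideal.span {(X 0 : MvPolynomial (Fin (n + 2)) ℂ)})).comp
        (rename Fin.succ)).comp (ev0 n) := by
    apply MvPolynomial.algHom_ext
    intro i
    refine Fin.cases ?_ (fun i => ?_) i
    · simp only [AlgHom.comp_apply, ev0_X0, map_zero]
      rw [Ideal.Quotient.mkₐ_eq_mk, Ideal.Quotient.eq_zero_iff_mem]
      exact Ideal.mem_span_singleton_self _
    · simp [ev0]
  have h2 := AlgHom.congr_fun h p
  rw [AlgHom.comp_apply, hp, map_zero, Ideal.Quotient.mkₐ_eq_mk, Ideal.Quotient.eq_zero_iff_mem,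
    Ideal.mem_span_singleton] at h2
  exact h2

theorem homog_rename (n : ℕ) (α : Fin (n + 1) → ℕ) (p : MvPolynomial (Fin (n + 1)) ℂ) (k : ℕ)
    (hp : IsWeightedHomogeneous α p k) :
    IsWeightedHomogeneous (Fin.cons 1 α : Fin (n + 2) → ℕ) (rename Fin.succ p) k := by
  rw [p.as_sum, map_sum]
  apply IsWeightedHomogeneous.sum
  intro t ht
  rw [rename_monomial]
  apply isWeightedHomogeneous_monomial
  rw [← hp (mem_support_iff.1 ht)]
  rw [Finsupp.weight_apply, Finsupp.weight_apply, Finsupp.sum_mapDomain_index]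
  · simp
  · simp
  · simp [add_mul]

theorem comp_X0_mul (n : ℕ) (α : Fin (n + 1) → ℕ) (p : MvPolynomial (Fin (n + 2)) ℂ) (k : ℕ) :
    weightedHomogeneousComponent (Fin.cons 1 α : Fin (n + 2) → ℕ) k (X 0 * p) =
      if k = 0 then 0 else
        X 0 * weightedHomogeneousComponent (Fin.cons 1 α : Fin (n + 2) → ℕ) (k - 1) p := by
  classical
  ext s
  have hw : ∀ s : Fin (n+2) →₀ ℕ, 0 ∈ s.support →
      Finsupp.weight (Fin.cons 1 α : Fin (n + 2) → ℕ) s =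
      Finsupp.weight (Fin.cons 1 α : Fin (n + 2) → ℕ) (s - Finsupp.single 0 1) + 1 := by
    intro s hs
    have := Finsupp.weight_sub_single_add (w := (Fin.cons 1 α : Fin (n + 2) → ℕ)) (f := s) (i := 0) (by simpa using hs)
    rw [← this]; simp
  split_ifs with hk
  · rw [coeff_weightedHomogeneousComponent, coeff_X_mul']
    split_ifs with h1 h2
    · have := hw s h2
      omega
    · simp
    · simp
  · rw [coeff_weightedHomogeneousComponent, coeff_X_mul', coeff_X_mul', coeff_weightedHomogeneousComponent]
    by_cases h2 : 0 ∈ s.support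
    · have := hw s h2
      simp only [if_pos h2]
      congr 1
      rw [this]
      apply propext
      omega
    · simp [h2]

theorem ideal_comp_mem {n : ℕ} (w : Fin (n + 2) → ℕ) (G : Fin (n + 1) → MvPolynomial (Fin (n + 2)) ℂ)
    (hG : ∀ i, ∃ e, IsWeightedHomogeneous w (G i) e) (p : MvPolynomial (Fin (n + 2)) ℂ)
    (hp : p ∈ Ideal.span (Set.range G)) (k : ℕ) :
    weightedHomogeneousComponent w k p ∈ Ideal.span (Set.range G) := by
  let _ := weightedGradedAlgebra ℂ w
  refine weightedHomogeneousComponent_mem_of_mem ℂ w ?_ hp k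
  apply Ideal.homogeneous_span
  rintro _ ⟨i, rfl⟩
  obtain ⟨e, he⟩ := hG i
  exact ⟨e, he⟩

theorem spanning {n : ℕ} (α : Fin (n + 1) → ℕ) (G : Fin (n + 1) → MvPolynomial (Fin (n + 2)) ℂ)
    (hG : ∀ i, ∃ e, IsWeightedHomogeneous (Fin.cons 1 α : Fin (n + 2) → ℕ) (G i) e)
    (I : Finset (Fin (n + 1) →₀ ℕ))
    (hIspan : Submodule.span ℂ (Set.range fun β : I =>
      Ideal.Quotient.mk (Ideal.span (Set.range fun i => ev0 n (G i)))
        (monomial (β : Fin (n + 1) →₀ ℕ) (1 : ℂ))) = ⊤) (k : ℕ) :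
    ∀ p, IsWeightedHomogeneous (Fin.cons 1 α : Fin (n + 2) → ℕ) p k →
      Ideal.Quotient.mk (Ideal.span (Set.range G)) p ∈ Submodule.span ℂ
        ((fun q : I × ℕ => Ideal.Quotient.mk (Ideal.span (Set.range G)) (X 0 ^ q.2 *
              rename Fin.succ (monomial (q.1 : Fin (n + 1) →₀ ℕ) (1 : ℂ)))) ''
          {q | q.2 + Finsupp.weight α (q.1 : Fin (n + 1) →₀ ℕ) = k}) := by
  classical
  set w : Fin (n + 2) → ℕ := Fin.cons 1 α with hw
  induction k using Nat.strong_induction_on with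
  | _ k ih =>
  intro p hp
  have h1 : Ideal.Quotient.mk (Ideal.span (Set.range fun i => ev0 n (G i))) (ev0 n p) ∈
      Submodule.span ℂ (Set.range fun β : I =>
      Ideal.Quotient.mk (Ideal.span (Set.range fun i => ev0 n (G i)))
        (monomial (β : Fin (n + 1) →₀ ℕ) (1 : ℂ))) := by rw [hIspan]; trivial
  obtain ⟨c, hc⟩ := (Submodule.mem_span_range_iff_exists_fun ℂ).1 h1
  have hc' : Ideal.Quotient.mk (Ideal.span (Set.range fun i => ev0 n (G i))) (ev0 n p) =
      Ideal.Quotient.mk (Ideal.span (Set.range fun i => ev0 n (G i)))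
        (∑ β : I, c β • monomial (β : Fin (n + 1) →₀ ℕ) (1 : ℂ)) := by
    rw [← hc, map_sum]
    rfl
  rw [Ideal.Quotient.eq, Ideal.mem_span_range_iff_exists_fun] at hc'
  obtain ⟨a, ha⟩ := hc'
  obtain ⟨p', hp'⟩ := ev0_eq_zero n
    (p - rename Fin.succ (∑ β : I, c β • monomial (β : Fin (n + 1) →₀ ℕ) (1 : ℂ))
      - ∑ i, rename Fin.succ (a i) * G i) (by
        simp only [map_sub, map_sum (ev0 n), map_mul, ev0_rename]
        rw [ha]; simp)
  have hj : ∑ i, rename Fin.succ (a i) * G i ∈ Ideal.span (Set.range G) :=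
    Ideal.sum_mem _ fun i _ => Ideal.mul_mem_left _ _ (Ideal.subset_span ⟨i, rfl⟩)
  have hj' := ideal_comp_mem w G hG _ hj k
  have hpp : p = ∑ β : I, c β • rename Fin.succ (monomial (β : Fin (n + 1) →₀ ℕ) (1 : ℂ))
      + ∑ i, rename Fin.succ (a i) * G i + X 0 * p' := by
    rw [← hp']; simp
  have hpk := congrArg (weightedHomogeneousComponent w k) hpp
  rw [hp.weightedHomogeneousComponent_same, map_add, map_add, map_sum, hw, comp_X0_mul, ← hw] at hpk
  rw [hpk, map_add, map_add, map_sum, Ideal.Quotient.eq_zero_iff_mem.2 hj', add_zero]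
  refine add_mem (Submodule.sum_mem _ fun β _ => ?_) ?_
  · have hh := homog_rename n α (monomial (β : Fin (n + 1) →₀ ℕ) (1 : ℂ)) _
      (isWeightedHomogeneous_monomial α _ _ rfl)
    rw [← hw] at hh
    rw [map_smul]
    change c β • Ideal.Quotient.mk (Ideal.span (Set.range G)) _ ∈ _
    apply Submodule.smul_mem
    by_cases hβ : Finsupp.weight α (β : Fin (n + 1) →₀ ℕ) = k
    · rw [hβ] at hh
      rw [hh.weightedHomogeneousComponent_same]
      exact Submodule.subset_span ⟨(β, 0), by simpa using hβ, by simp⟩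
    · rw [hh.weightedHomogeneousComponent_ne k (Ne.symm hβ), map_zero]
      exact zero_mem _
  · split_ifs with hk
    · rw [map_zero]; exact zero_mem _
    · have := ih (k - 1) (by omega) (weightedHomogeneousComponent w (k-1) p')
        (weightedHomogeneousComponent_isWeightedHomogeneous _ _)
      rw [map_mul]
      let Tm : (MvPolynomial (Fin (n + 2)) ℂ ⧸ Ideal.span (Set.range G)) →ₗ[ℂ] _ :=
        LinearMap.mulLeft ℂ (Ideal.Quotient.mk (Ideal.span (Set.range G)) (X 0))
      have h3 := Submodule.mem_map_of_mem (f := Tm) this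
      rw [Submodule.map_span] at h3
      refine Submodule.span_mono ?_ h3
      rintro _ ⟨_, ⟨⟨β, b⟩, hb, rfl⟩, rfl⟩
      refine ⟨(β, b + 1), ?_, ?_⟩
      · simp only [Set.mem_ofPred_eq] at hb ⊢
        omega
      · simp only [Tm, LinearMap.mulLeft_apply, ← map_mul]
        congr 1
        ring

theorem torsion_free {n : ℕ} (G : Fin (n + 1) → MvPolynomial (Fin (n + 2)) ℂ)
    (m : Fin (n + 1) → ℕ)
    (hm : ∀ i, (X i ^ m i : MvPolynomial (Fin (n + 1)) ℂ) ∈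
      Ideal.span (Set.range fun i => ev0 n (G i)))
    (p : MvPolynomial (Fin (n + 2)) ℂ) (hp : X 0 * p ∈ Ideal.span (Set.range G)) :
    p ∈ Ideal.span (Set.range G) := by
  obtain ⟨a, ha⟩ := Ideal.mem_span_range_iff_exists_fun.1 hp
  obtain ⟨h, hanti, hh⟩ := koszul_syzygy (fun i => ev0 n (G i)) m hm (fun i => ev0 n (a i)) (by
    have := congrArg (ev0 n) ha
    simpa [ev0_X0] using this)
  have hq : ∀ j, ∃ q, a j - ∑ i, G i * rename Fin.succ (h i j) = X 0 * q := by
    intro j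
    apply ev0_eq_zero
    simp only [map_sub, map_sum, map_mul, ev0_rename]
    rw [hh j, sub_self]
  choose q hq using hq
  have hz : ∑ j, (∑ i, G i * rename Fin.succ (h i j)) * G j = 0 := by
    rw [← self_eq_neg]
    conv_rhs => rw [← Finset.sum_neg_distrib]
    simp only [Finset.sum_mul, ← Finset.sum_neg_distrib]
    rw [Finset.sum_comm]
    refine Finset.sum_congr rfl fun i _ => Finset.sum_congr rfl fun j _ => ?_
    rw [hanti i j, map_neg]; ring
  rw [Ideal.mem_span_range_iff_exists_fun]
  refine ⟨q, ?_⟩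
  apply mul_left_cancel₀ (X_ne_zero (R := ℂ) (0 : Fin (n+2)))
  rw [← ha, Finset.mul_sum, ← sub_zero (∑ i, a i * G i), ← hz, ← Finset.sum_sub_distrib]
  refine Finset.sum_congr rfl fun j _ => ?_
  rw [← sub_mul, hq j]; ring

theorem indep {n : ℕ} (G : Fin (n + 1) → MvPolynomial (Fin (n + 2)) ℂ)
    (m : Fin (n + 1) → ℕ)
    (hm : ∀ i, (X i ^ m i : MvPolynomial (Fin (n + 1)) ℂ) ∈
      Ideal.span (Set.range fun i => ev0 n (G i)))
    (I : Finset (Fin (n + 1) →₀ ℕ))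
    (hIindep : LinearIndependent ℂ (fun β : I =>
      Ideal.Quotient.mk (Ideal.span (Set.range fun i => ev0 n (G i)))
        (monomial (β : Fin (n + 1) →₀ ℕ) (1 : ℂ)))) :
    LinearIndependent ℂ (fun q : I × ℕ =>
      Ideal.Quotient.mk (Ideal.span (Set.range G)) (X 0 ^ q.2 *
              rename Fin.succ (monomial (q.1 : Fin (n + 1) →₀ ℕ) (1 : ℂ)))) := by
  classical
  have key : ∀ (N : ℕ) (c : ℕ → I → ℂ),
      ∑ a ∈ Finset.range N, X 0 ^ a * rename Fin.succ
        (∑ β : I, c a β • monomial (β : Fin (n + 1) →₀ ℕ) (1 : ℂ)) ∈ Ideal.span (Set.range G) →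
      ∀ a < N, ∀ β, c a β = 0 := by
    intro N
    induction N with
    | zero => intro c _ a ha; omega
    | succ N ih =>
      intro c hc
      rw [Finset.sum_range_succ'] at hc
      have h0 : ∀ β, c 0 β = 0 := by
        obtain ⟨u, hu⟩ := Ideal.mem_span_range_iff_exists_fun.1 hc
        have h := congrArg (ev0 n) hu
        simp only [map_sum (ev0 n), map_add, map_mul, map_pow, ev0_X0, ev0_rename] at h
        simp only [pow_succ, mul_zero, zero_mul, Finset.sum_const_zero, pow_zero, one_mul, zero_add] at h
        refine Fintype.linearIndependent_iff.1 hIindep (c 0) ?_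
        have h2 : Ideal.Quotient.mk (Ideal.span (Set.range fun i => ev0 n (G i)))
          (∑ β : I, c 0 β • monomial (β : Fin (n + 1) →₀ ℕ) (1 : ℂ)) = 0 := by
          rw [Ideal.Quotient.eq_zero_iff_mem, ← h]
          exact Ideal.sum_mem _ fun i _ => Ideal.mul_mem_left _ _ (Ideal.subset_span ⟨i, rfl⟩)
        rw [map_sum] at h2
        exact h2
      have h1 := ih (fun a => c (a + 1)) (by
        apply torsion_free G m hm
        convert hc using 1
        simp only [h0, zero_smul, Finset.sum_const_zero, map_zero, mul_zero, add_zero]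
        rw [Finset.mul_sum]
        refine Finset.sum_congr rfl fun a _ => ?_
        ring)
      intro a ha
      cases a with
      | zero => exact h0
      | succ a => exact h1 a (by omega)
  rw [linearIndependent_iff']
  intro s c hc q hq
  obtain ⟨N, hN⟩ : ∃ N, ∀ q ∈ s, q.2 < N := ⟨s.sup Prod.snd + 1, fun q hq =>
    Nat.lt_succ_of_le (Finset.le_sup (f := Prod.snd) hq)⟩
  have := key N (fun a β => if (β, a) ∈ s then c (β, a) else 0) ?_ q.2 (hN q hq) q.1
  · simpa [hq] using this
  · rw [← Ideal.Quotient.eq_zero_iff_mem, ← hc]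
    simp only [map_sum, Finset.mul_sum]
    rw [Finset.sum_comm, ← Finset.sum_product' (s := Finset.univ) (t := Finset.range N)
      (f := fun β a => Ideal.Quotient.mk (Ideal.span (Set.range G)) (X 0 ^ a * rename Fin.succ
        ((if (β, a) ∈ s then c (β, a) else 0) • monomial (β : Fin (n + 1) →₀ ℕ) (1 : ℂ))))]
    symm
    apply Finset.sum_subset_zero_on_sdiff
    · intro q hq
      simp [hN q hq]
    · intro q hq
      have : q ∉ s := (Finset.mem_sdiff.1 hq).2
      simp [this]
    · intro q hq
      simp only [Prod.mk.eta, if_pos hq, map_smul]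
      rw [mul_smul_comm]
      rfl

theorem homogenization_homog (n d : ℕ) (α : Fin (n + 1) → ℕ)
    (f : MvPolynomial (Fin (n + 1)) ℂ) :
    IsWeightedHomogeneous (Fin.cons 1 α : Fin (n + 2) → ℕ) (homogenization n d α f) d := by
  unfold homogenization
  apply IsWeightedHomogeneous.sum
  intro i hi
  have hi' : i ≤ d := by simpa [Nat.lt_succ_iff] using hi
  have h1 := homog_rename n α _ i (weightedHomogeneousComponent_isWeightedHomogeneous (w := α) i f)
  have h2 := (isWeightedHomogeneous_X ℂ (Fin.cons 1 α : Fin (n + 2) → ℕ) 0).pow (d - i)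
  have h3 := h1.mul h2
  convert h3 using 1
  simp
  omega

theorem ev0_pderiv (n d : ℕ) (α : Fin (n + 1) → ℕ)
    (f : MvPolynomial (Fin (n + 1)) ℂ) (i : Fin (n + 1)) :
    ev0 n (pderiv i.succ (homogenization n d α f)) =
      pderiv i (weightedHomogeneousComponent α d f) := by
  unfold homogenization
  have hX : ∀ k, pderiv i.succ ((X 0 : MvPolynomial (Fin (n + 2)) ℂ) ^ k) = 0 := by
    intro k
    rw [pderiv_pow, pderiv_X_of_ne (Fin.succ_ne_zero i).symm, mul_zero]
  simp only [map_sum, pderiv_mul, hX, mul_zero, add_zero, map_mul, map_pow, ev0_X0,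
    pderiv_rename (Fin.succ_injective _), ev0_rename]
  rw [Finset.sum_range_succ, Finset.sum_eq_zero]
  · simp
  · intro k hk
    have : d - k ≠ 0 := by have := Finset.mem_range.1 hk; omega
    rw [zero_pow this, mul_zero]

theorem pderiv_homog (n d : ℕ) (w : Fin (n + 2) → ℕ) (F : MvPolynomial (Fin (n + 2)) ℂ)
    (hF : IsWeightedHomogeneous w F d) (i : Fin (n + 2)) :
    ∃ e, IsWeightedHomogeneous w (pderiv i F) e := by
  by_cases h : w i ≤ d
  · exact ⟨d - w i, hF.pderiv (by omega)⟩
  · refine ⟨0, ?_⟩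
    rw [pderiv_eq_zero_of_notMem_vars]
    · exact isWeightedHomogeneous_zero _ _ _
    · intro hi
      obtain ⟨t, ht, hit⟩ := (mem_vars_iff_mem_support i).1 hi
      have h1 := hF (mem_support_iff.1 ht)
      have h2 := Finsupp.le_weight w (s := i) (f := t)
      have h3 : t i ≠ 0 := by simpa using hit
      have h4 := Finsupp.weight_sub_single_add (w := w) (f := t) (i := i) h3
      omega


theorem mono_homog {n : ℕ} (α : Fin (n + 1) → ℕ) (I : Finset (Fin (n + 1) →₀ ℕ)) (q : I × ℕ) :
    IsWeightedHomogeneous (Fin.cons 1 α : Fin (n + 2) → ℕ)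
      (X 0 ^ q.2 * rename Fin.succ (monomial (q.1 : Fin (n + 1) →₀ ℕ) (1 : ℂ)))
      (q.2 + Finsupp.weight α (q.1 : Fin (n + 1) →₀ ℕ)) := by
  have h1 := homog_rename n α (monomial (q.1 : Fin (n + 1) →₀ ℕ) (1 : ℂ)) _
    (isWeightedHomogeneous_monomial α _ _ rfl)
  have h2 := (isWeightedHomogeneous_X ℂ (Fin.cons 1 α : Fin (n + 2) → ℕ) 0).pow q.2
  have h3 := h2.mul h1
  convert h3 using 1
  simp

theorem basis_exists {n : ℕ} (α : Fin (n + 1) → ℕ) (G : Fin (n + 1) → MvPolynomial (Fin (n + 2)) ℂ)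
    (hGh : ∀ i, ∃ e, IsWeightedHomogeneous (Fin.cons 1 α : Fin (n + 2) → ℕ) (G i) e)
    (m : Fin (n + 1) → ℕ)
    (hm : ∀ i, (X i ^ m i : MvPolynomial (Fin (n + 1)) ℂ) ∈
      Ideal.span (Set.range fun i => ev0 n (G i)))
    (I : Finset (Fin (n + 1) →₀ ℕ))
    (hIindep : LinearIndependent ℂ (fun β : I =>
      Ideal.Quotient.mk (Ideal.span (Set.range fun i => ev0 n (G i)))
        (monomial (β : Fin (n + 1) →₀ ℕ) (1 : ℂ))))
    (hIspan : Submodule.span ℂ (Set.range fun β : I =>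
      Ideal.Quotient.mk (Ideal.span (Set.range fun i => ev0 n (G i)))
        (monomial (β : Fin (n + 1) →₀ ℕ) (1 : ℂ))) = ⊤)
    : ∃ e : Module.Basis (I × ℕ) ℂ (MvPolynomial (Fin (n + 2)) ℂ ⧸ Ideal.span (Set.range G)),
      ∀ q, e q = Ideal.Quotient.mk (Ideal.span (Set.range G)) (X 0 ^ q.2 *
              rename Fin.succ (monomial (q.1 : Fin (n + 1) →₀ ℕ) (1 : ℂ))) := by
  have hli := indep G m hm I hIindep
  have hsp := spanning α G hGh I hIspan
  have htop : ⊤ ≤ Submodule.span ℂ (Set.range (fun q : I × ℕ =>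
      Ideal.Quotient.mk (Ideal.span (Set.range G)) (X 0 ^ q.2 *
              rename Fin.succ (monomial (q.1 : Fin (n + 1) →₀ ℕ) (1 : ℂ))))) := by
    rintro x -
    obtain ⟨p, rfl⟩ := Ideal.Quotient.mk_surjective x
    rw [p.as_sum, map_sum]
    refine Submodule.sum_mem _ fun t _ => ?_
    exact Submodule.span_mono (Set.image_subset_range _ _)
      (hsp _ _ (isWeightedHomogeneous_monomial _ t _ rfl))
  exact ⟨Module.Basis.mk hli htop, fun q => Module.Basis.mk_apply hli htop q⟩

theorem core {n : ℕ} (α : Fin (n + 1) → ℕ) (G : Fin (n + 1) → MvPolynomial (Fin (n + 2)) ℂ)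
    (hGh : ∀ i, ∃ e, IsWeightedHomogeneous (Fin.cons 1 α : Fin (n + 2) → ℕ) (G i) e)
    (m : Fin (n + 1) → ℕ)
    (hm : ∀ i, (X i ^ m i : MvPolynomial (Fin (n + 1)) ℂ) ∈
      Ideal.span (Set.range fun i => ev0 n (G i)))
    (I : Finset (Fin (n + 1) →₀ ℕ))
    (hIindep : LinearIndependent ℂ (fun β : I =>
      Ideal.Quotient.mk (Ideal.span (Set.range fun i => ev0 n (G i)))
        (monomial (β : Fin (n + 1) →₀ ℕ) (1 : ℂ))))
    (hIspan : Submodule.span ℂ (Set.range fun β : I =>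
      Ideal.Quotient.mk (Ideal.span (Set.range fun i => ev0 n (G i)))
        (monomial (β : Fin (n + 1) →₀ ℕ) (1 : ℂ))) = ⊤)
    (r : ℕ) (Q0 : MvPolynomial (Fin (n + 2)) ℂ)
    (hQh : IsWeightedHomogeneous (Fin.cons 1 α : Fin (n + 2) → ℕ) Q0 r) :
    {c : ℂ | ∃ J' : Ideal (MvPolynomial (Fin (n + 2)) ℂ),
      J' = Ideal.span (insert (Q0 - C c * X 0 ^ r) (Set.range G)) ∧ ¬ (LinearIndependent ℂ
        (fun q : I × Fin r =>
          Ideal.Quotient.mk J'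
            (X 0 ^ (q.2 : ℕ) *
              rename Fin.succ (monomial (q.1 : Fin (n + 1) →₀ ℕ) (1 : ℂ)))) ∧
      Submodule.span ℂ
        (Set.range fun q : I × Fin r =>
          Ideal.Quotient.mk J'
            (X 0 ^ (q.2 : ℕ) *
              rename Fin.succ (monomial (q.1 : Fin (n + 1) →₀ ℕ) (1 : ℂ)))) = ⊤)}.Finite := by
  obtain ⟨e, he⟩ := basis_exists α G hGh m hm I hIindep hIspan
  have hsp := spanning α G hGh I hIspan
  have hmono := mono_homog α I
  clear hm hIindep hIspan
  generalize hJ : Ideal.span (Set.range G) = J at e he hsp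
  have hefun : (e : I × ℕ → _) = fun q : I × ℕ => Ideal.Quotient.mk J (X 0 ^ q.2 *
              rename Fin.succ (monomial (q.1 : Fin (n + 1) →₀ ℕ) (1 : ℂ))) := funext he
  let T : (MvPolynomial (Fin (n + 2)) ℂ ⧸ J) →ₗ[ℂ] (MvPolynomial (Fin (n + 2)) ℂ ⧸ J) :=
    LinearMap.mulLeft ℂ (Ideal.Quotient.mk J (X 0))
  let Q : (MvPolynomial (Fin (n + 2)) ℂ ⧸ J) →ₗ[ℂ] (MvPolynomial (Fin (n + 2)) ℂ ⧸ J) :=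
    LinearMap.mulLeft ℂ (Ideal.Quotient.mk J (Q0))
  have hlin := lin_part e (fun β => Finsupp.weight α (β : Fin (n + 1) →₀ ℕ)) (r) T Q
    (by
      intro β a
      rw [he, he]
      simp only [T, LinearMap.mulLeft_apply, ← map_mul]
      congr 1
      ring)
    (by
      intro x
      simp only [T, Q, LinearMap.mulLeft_apply]
      ring)
    (by
      intro β a
      rw [he, hefun]
      simp only [Q, LinearMap.mulLeft_apply, ← map_mul]
      apply hsp
      have h5 := hQh.mul (hmono (β, a))
      rw [add_comm r] at h5
      exact h5)
  have hTr : ∀ p, (T ^ (r)) (Ideal.Quotient.mk J p) = Ideal.Quotient.mk J (X 0 ^ (r) * p) := by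
    intro p
    simp only [T, LinearMap.pow_mulLeft, LinearMap.mulLeft_apply, map_mul, map_pow]
  refine hlin.subset ?_
  rintro c ⟨J', hJ', hb⟩
  intro hgood
  apply hb
  obtain ⟨hinj, hsurj⟩ := hgood
  clear hb hlin
  set P : MvPolynomial (Fin (n + 2)) ℂ := Q0 - C c * X 0 ^ (r) with hP
  have hPQ : ∀ u, Q (Ideal.Quotient.mk J u) - c • (T ^ (r)) (Ideal.Quotient.mk J u) =
      Ideal.Quotient.mk J (P * u) := by
    intro u
    rw [hTr]
    have : c • Ideal.Quotient.mk J (X 0 ^ (r) * u) =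
        Ideal.Quotient.mk J (C c * (X 0 ^ (r) * u)) := by
      rw [← smul_eq_C_mul]; rfl
    rw [this]
    simp only [Q, LinearMap.mulLeft_apply, ← map_mul, ← map_sub]
    congr 1
    rw [hP]; ring
  have hmem : ∀ p, p ∈ J' ↔ ∃ u, ∃ z ∈ J, p = u * P + z := by
    intro p
    rw [hJ', Ideal.mem_span_insert, hJ]
  have hJle : J ≤ J' := fun z hz => (hmem z).2 ⟨0, z, hz, by simp⟩
  constructor
  · rw [Fintype.linearIndependent_iff]
    intro k hc
    set p : MvPolynomial (Fin (n + 2)) ℂ := ∑ q : I × Fin (r), k q • (X 0 ^ (q.2 : ℕ) *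
              rename Fin.succ (monomial (q.1 : Fin (n + 1) →₀ ℕ) (1 : ℂ))) with hp
    have hp0 : Ideal.Quotient.mk (J') p = 0 := by
      rw [← hc, hp, map_sum]; rfl
    have hpe : Ideal.Quotient.mk J p = ∑ q : I × Fin (r), k q • e (q.1, (q.2 : ℕ)) := by
      rw [hp, map_sum]
      refine Finset.sum_congr rfl fun q _ => ?_
      rw [he]; rfl
    rw [Ideal.Quotient.eq_zero_iff_mem, hmem] at hp0
    obtain ⟨u, z, hz, hpu⟩ := hp0
    have h1 : Ideal.Quotient.mk J p = Ideal.Quotient.mk J (P * u) := by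
      rw [hpu, map_add, Ideal.Quotient.eq_zero_iff_mem.2 hz, add_zero, mul_comm]
    have hu := hinj (Ideal.Quotient.mk J u) (by
      rw [hPQ, ← h1, hpe]
      refine Submodule.sum_mem _ fun q _ => Submodule.smul_mem _ _ ?_
      exact Submodule.subset_span ⟨_, q.2.isLt, rfl⟩)
    rw [map_mul, hu, mul_zero, hpe] at h1
    have hcomp : LinearIndependent ℂ (e ∘ fun q : I × Fin (r) => (q.1, (q.2 : ℕ))) := by
      apply e.linearIndependent.comp
      rintro ⟨q1, q2⟩ ⟨q1', q2'⟩ h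
      simp only [Prod.mk.injEq] at h
      exact Prod.ext h.1 (Fin.ext h.2)
    exact Fintype.linearIndependent_iff.1 hcomp k h1
  · rw [eq_top_iff]
    rintro x -
    obtain ⟨p, rfl⟩ := Ideal.Quotient.mk_surjective x
    obtain ⟨m', hm'⟩ := hsurj (Ideal.Quotient.mk J p)
    obtain ⟨u, rfl⟩ := Ideal.Quotient.mk_surjective m'
    rw [hPQ, ← map_sub] at hm'
    let fac : (MvPolynomial (Fin (n + 2)) ℂ ⧸ J) →ₗ[ℂ]
        (MvPolynomial (Fin (n + 2)) ℂ ⧸ J') :=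
      (Ideal.Quotient.factorₐ ℂ hJle).toLinearMap
    have hfac : ∀ p, fac (Ideal.Quotient.mk J p) =
      Ideal.Quotient.mk (J') p := fun p => rfl
    have h3 := Submodule.mem_map_of_mem (f := fac) hm'
    rw [Submodule.map_span, hfac] at h3
    have h4 : Ideal.Quotient.mk (J') (p - P * u) =
        Ideal.Quotient.mk (J') p := by
      rw [Ideal.Quotient.eq, hmem]
      exact ⟨-u, 0, zero_mem _, by ring⟩
    rw [h4] at h3
    refine Submodule.span_mono ?_ h3
    rintro _ ⟨_, ⟨⟨β, a⟩, ha, rfl⟩, rfl⟩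
    refine ⟨(β, ⟨a, ha⟩), ?_⟩
    rw [he, hfac]

theorem fullJac_eq (n d : ℕ) (α : Fin (n + 1) → ℕ)
    (f : MvPolynomial (Fin (n + 1)) ℂ) (b : ℂ) :
    fullJacobianIdeal n d α f b = Ideal.span (insert
      (pderiv 0 (homogenization n d α f) - C (b * d) * X 0 ^ (d - 1))
      (Set.range fun i : Fin (n + 1) => pderiv i.succ (homogenization n d α f))) := by
  unfold fullJacobianIdeal
  congr 1
  ext x
  simp only [Set.mem_range, Set.mem_insert_iff, Fin.exists_fin_succ]
  have e0 : pderiv 0 (homogenization n d α f - C b * X 0 ^ d) =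
      pderiv 0 (homogenization n d α f) - C (b * d) * X 0 ^ (d - 1) := by
    rw [map_sub, pderiv_C_mul, pderiv_pow, pderiv_X_self, map_mul]
    simp only [map_natCast, mul_one]
    ring
  have e1 : ∀ i : Fin (n + 1), pderiv i.succ (homogenization n d α f - C b * X 0 ^ d) =
      pderiv i.succ (homogenization n d α f) := by
    intro i
    rw [map_sub, pderiv_C_mul, pderiv_pow, pderiv_X_of_ne (Fin.succ_ne_zero i).symm]
    simp
  rw [e0]
  simp only [e1]
  rw [eq_comm]

theorem tame_dpos {n : ℕ} (α : Fin (n + 1) → ℕ) (hαpos : ∀ i, 0 < α i) (d : ℕ)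
    (g : MvPolynomial (Fin (n + 1)) ℂ) (hgh : IsWeightedHomogeneous α g d)
    (htame : ∀ x : Fin (n + 1) → ℂ, (∀ i, eval x (pderiv i g) = 0) → x = 0) : 0 < d := by
  rcases Nat.eq_zero_or_pos d with h0 | h
  · exfalso
    have hz : ∀ i, pderiv i g = 0 := by
      intro i
      apply pderiv_eq_zero_of_notMem_vars
      intro hi
      obtain ⟨t, ht, hit⟩ := (mem_vars_iff_mem_support i).1 hi
      have h1 := hgh (mem_support_iff.1 ht)
      have h3 : t i ≠ 0 := by simpa using hit
      have h4 := Finsupp.weight_sub_single_add (w := α) (f := t) (i := i) h3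
      have := hαpos i
      omega
    have := congrFun (htame (fun _ => 1) (fun i => by rw [hz i]; simp)) 0
    simp at this
  · exact h

theorem tame_pow {n : ℕ} (G : Fin (n + 1) → MvPolynomial (Fin (n + 1)) ℂ)
    (htame : ∀ x : Fin (n + 1) → ℂ, (∀ i, eval x (G i) = 0) → x = 0) (i : Fin (n + 1)) :
    ∃ m : ℕ, (X i ^ m : MvPolynomial (Fin (n + 1)) ℂ) ∈ Ideal.span (Set.range G) := by
  have : (X i : MvPolynomial (Fin (n + 1)) ℂ) ∈ (Ideal.span (Set.range G)).radical := by
    rw [← vanishingIdeal_zeroLocus_eq_radical (K := ℂ), mem_vanishingIdeal_iff]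
    intro x hx
    have := htame x (fun i => by
      have := hx (G i) (Ideal.subset_span ⟨i, rfl⟩)
      simpa [aeval_eq_eval] using this)
    simp [this]
  exact this

theorem main_aux {n : ℕ} (α : Fin (n + 1) → ℕ) (d : ℕ) (hdpos : 0 < d)
    (F : MvPolynomial (Fin (n + 2)) ℂ)
    (hFh : IsWeightedHomogeneous (Fin.cons 1 α : Fin (n + 2) → ℕ) F d)
    (G' : Fin (n + 1) → MvPolynomial (Fin (n + 1)) ℂ)
    (hG' : G' = fun i => ev0 n (pderiv i.succ F))
    (htame : ∀ x : Fin (n + 1) → ℂ, (∀ i, eval x (G' i) = 0) → x = 0)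
    (I : Finset (Fin (n + 1) →₀ ℕ))
    (hIindep : LinearIndependent ℂ (fun β : I =>
      Ideal.Quotient.mk (Ideal.span (Set.range G'))
        (monomial (β : Fin (n + 1) →₀ ℕ) (1 : ℂ))))
    (hIspan : Submodule.span ℂ (Set.range fun β : I =>
      Ideal.Quotient.mk (Ideal.span (Set.range G'))
        (monomial (β : Fin (n + 1) →₀ ℕ) (1 : ℂ))) = ⊤)
    (J : ℂ → Ideal (MvPolynomial (Fin (n + 2)) ℂ))
    (hJ : ∀ b, J b = Ideal.span (insert
      (pderiv 0 F - C (b * d) * X 0 ^ (d - 1))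
      (Set.range fun i : Fin (n + 1) => pderiv i.succ F))) :
    {b : ℂ | ¬ (LinearIndependent ℂ
        (fun q : I × Fin (d - 1) =>
          Ideal.Quotient.mk (J b)
            (X 0 ^ (q.2 : ℕ) *
              rename Fin.succ (monomial (q.1 : Fin (n + 1) →₀ ℕ) (1 : ℂ)))) ∧
      Submodule.span ℂ
        (Set.range fun q : I × Fin (d - 1) =>
          Ideal.Quotient.mk (J b)
            (X 0 ^ (q.2 : ℕ) *
              rename Fin.succ (monomial (q.1 : Fin (n + 1) →₀ ℕ) (1 : ℂ)))) = ⊤)}.Finite := by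
  have hm := tame_pow G' htame
  subst hG'
  choose m hm using hm
  have hQh : IsWeightedHomogeneous (Fin.cons 1 α : Fin (n + 2) → ℕ) (pderiv 0 F) (d - 1) :=
    hFh.pderiv (by simp; omega)
  have hlin := core α (fun i => pderiv i.succ F) (fun i => pderiv_homog n d _ F hFh i.succ)
    m hm I hIindep hIspan (d - 1) (pderiv 0 F) hQh
  have hd0 : (d : ℂ) ≠ 0 := Nat.cast_ne_zero.2 hdpos.ne'
  refine (hlin.preimage (f := fun b : ℂ => b * d)
    (fun x _ y _ h => mul_right_cancel₀ hd0 h)).subset ?_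
  intro b hb
  exact ⟨J b, hJ b, hb⟩

set_option maxHeartbeats 400000 in
/-- Let `f` be strongly tame of weighted degree `d` with homogenization
`F`, and let the monomials `x^β`, `β ∈ I`, be a ℂ-basis of `V_g`.  For all but finitely
many `b ∈ ℂ`, the monomials `x₀^j·x^β`, `β ∈ I`, `0 ≤ j ≤ d - 2`, form a ℂ-basis of
`ℂ[x₀,x]/⟨∂F_b/∂x₀,…,∂F_b/∂x_{n+1}⟩` with `F_b = F - b·x₀^d` (i.e. one can take
`d_β = d - 1` for all `β` for a generic `b`). -/
theorem generic_dbeta_eq_d_sub_one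
    (n : ℕ) (hn : 1 ≤ n) (α : Fin (n + 1) → ℕ)
    (hαpos : ∀ i, 0 < α i) (hα : Finset.univ.gcd α = 1)
    (f : MvPolynomial (Fin (n + 1)) ℂ) (d : ℕ)
    (hd : MvPolynomial.weightedTotalDegree α f = d)
    (g : MvPolynomial (Fin (n + 1)) ℂ)
    (hg : g = weightedHomogeneousComponent α d f)
    (hg0 : g ≠ 0)
    (htame : ∀ x : Fin (n + 1) → ℂ, (∀ i, eval x (pderiv i g) = 0) → x = 0)
    (I : Finset (Fin (n + 1) →₀ ℕ))
    (hIindep : LinearIndependent ℂ (fun β : I =>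
      Ideal.Quotient.mk (Ideal.span (Set.range fun i => pderiv i g))
        (monomial (β : Fin (n + 1) →₀ ℕ) (1 : ℂ))))
    (hIspan : Submodule.span ℂ (Set.range fun β : I =>
      Ideal.Quotient.mk (Ideal.span (Set.range fun i => pderiv i g))
        (monomial (β : Fin (n + 1) →₀ ℕ) (1 : ℂ))) = ⊤) :
    {b : ℂ | ¬ (LinearIndependent ℂ
        (fun q : I × Fin (d - 1) =>
          Ideal.Quotient.mk (fullJacobianIdeal n d α f b)
            (X 0 ^ (q.2 : ℕ) *
              rename Fin.succ (monomial (q.1 : Fin (n + 1) →₀ ℕ) (1 : ℂ)))) ∧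
      Submodule.span ℂ
        (Set.range fun q : I × Fin (d - 1) =>
          Ideal.Quotient.mk (fullJacobianIdeal n d α f b)
            (X 0 ^ (q.2 : ℕ) *
              rename Fin.succ (monomial (q.1 : Fin (n + 1) →₀ ℕ) (1 : ℂ)))) = ⊤)}.Finite := by
  have hgh : IsWeightedHomogeneous α g d := by
    rw [hg]; exact weightedHomogeneousComponent_isWeightedHomogeneous _ _
  have hdpos : 0 < d := tame_dpos α hαpos d g hgh htame
  have hG' : (fun i => pderiv i g) =
      fun i => ev0 n (pderiv i.succ (homogenization n d α f)) := by
    funext i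
    rw [hg]; exact (ev0_pderiv n d α f i).symm
  exact main_aux α d hdpos (homogenization n d α f) (homogenization_homog n d α f)
    (fun i => pderiv i g) hG' htame I hIindep hIspan (fullJacobianIdeal n d α f)
    (fullJac_eq n d α f)
end
end

section
/- Let f ∈ ℂ[x₁,…,x_{n+1}] be a strongly tame polynomial and let J ⊆ ℂ[x] be the ℂ-linear span of all polynomials (∂f/∂xᵢ)·(∂h/∂xⱼ) − (∂f/∂xⱼ)·(∂h/∂xᵢ) with h ∈ ℂ[x] and 1 ≤ i < j ≤ n+1. Then J is stable under multiplication by f, so the quotient ℂ[x]/J is a module over the polynomial ring ℂ[t] with t acting as multiplication by f, and the classes of the monomials x^β, β ∈ I, form a basis of ℂ[x]/J as a free ℂ[t]-module of rank μ = #I. (This is the statement that the forms ω_β = x^β dx, β ∈ I, freely generate the Brieskorn module H'' = Ω^{n+1}/(df ∧ dΩ^{n−1}) over ℂ[t]: identifying an (n+1)-form A·dx₁∧⋯∧dx_{n+1} with its coefficient A, the subspace of coefficients of forms in df ∧ dΩ^{n−1} is exactly J.) -/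
open MvPolynomial

section Koszul
variable {R : Type*} [CommRing R] {N : ℕ}

theorem bk_lift (Y : Ideal R) (y : R) (p : ℕ) (ω : (Fin N → R) [⋀^Fin p]→ₗ[R] R)
    (h : ∀ v, ω v ∈ Y ⊔ Ideal.span {y}) :
    ∃ ζ : (Fin N → R) [⋀^Fin p]→ₗ[R] R, ∀ v, ω v - y * ζ v ∈ Y := by
  classical
  let b := (Pi.basisFun R (Fin N)).exteriorPower p
  let L := exteriorPower.alternatingMapLinearEquiv ω
  have hb : ∀ s, ∃ z, L (b s) - y * z ∈ Y := by
    intro s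
    have hmem : L (b s) ∈ Y ⊔ Ideal.span {y} := by
      simp only [b, exteriorPower.basis_apply, exteriorPower.ιMulti_family, L]
      rw [exteriorPower.alternatingMapLinearEquiv_apply_ιMulti]
      exact h _
    obtain ⟨u, hu, w, hw, huw⟩ := Submodule.mem_sup.1 hmem
    obtain ⟨z, rfl⟩ := Ideal.mem_span_singleton'.1 hw
    refine ⟨z, ?_⟩
    rw [← huw]
    convert hu using 1
    ring
  choose z hz using hb
  let Z := b.constr R z
  refine ⟨Z.compAlternatingMap (exteriorPower.ιMulti R p), fun v => ?_⟩
  have h0 : (Submodule.mkQ Y) ∘ₗ (L - y • Z) = 0 := by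
    apply b.ext
    intro s
    simp only [LinearMap.comp_apply, LinearMap.zero_apply, Submodule.mkQ_apply]
    rw [Submodule.Quotient.mk_eq_zero]
    simpa [Z, Module.Basis.constr_basis] using hz s
  have h1 := LinearMap.congr_fun h0 (exteriorPower.ιMulti R p v)
  simp only [LinearMap.comp_apply, LinearMap.zero_apply, Submodule.mkQ_apply] at h1
  rw [Submodule.Quotient.mk_eq_zero] at h1
  simpa [L, exteriorPower.alternatingMapLinearEquiv_apply_ιMulti] using h1

theorem bk_homotopy (g : Fin N → R) (r : (Fin N → R) →ₗ[R] R) (p : ℕ)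
    (ω : (Fin N → R) [⋀^Fin (p+1)]→ₗ[R] R) (v : Fin (p+1) → (Fin N → R)) :
    (AlternatingMap.alternatizeUncurryFin (r.smulRight ω)).curryLeft g v
      = r g * ω v - ∑ i : Fin (p+1), (-1) ^ (i : ℕ) * (r (v i) * ω.curryLeft g (i.removeNth v)) := by
  rw [AlternatingMap.curryLeft_apply_apply, AlternatingMap.alternatizeUncurryFin_apply,
    Fin.sum_univ_succ]
  rw [sub_eq_add_neg, ← Finset.sum_neg_distrib]
  congr 1
  · simp [Fin.removeNth_zero]
  · apply Finset.sum_congr rfl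
    intro i _
    have : (i.succ).removeNth (Matrix.vecCons g v) = Matrix.vecCons g (i.removeNth v) := by
      funext j
      refine Fin.cases ?_ (fun j => ?_) j
      · simp [Fin.removeNth]
      · simp [Fin.removeNth]
    rw [this]
    simp [pow_succ]

theorem bk_koszul_aux (g y : Fin N → R) (hy : ∀ k, y k ∈ Ideal.span (Set.range g))
    (hreg : ∀ k : Fin N, ∀ P, y k * P ∈ Ideal.span (y '' {j | j.val < k.val}) →
      P ∈ Ideal.span (y '' {j | j.val < k.val})) :
    ∀ m k, k + m = N → ∀ q, k ≤ q → ∀ ω : (Fin N → R) [⋀^Fin (q+1)]→ₗ[R] R,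
      (∀ v, ω.curryLeft g v ∈ Ideal.span (y '' {j | j.val < k})) →
      ∃ η : (Fin N → R) [⋀^Fin (q+2)]→ₗ[R] R,
        ∀ v, ω v - η.curryLeft g v ∈ Ideal.span (y '' {j | j.val < k}) := by
  intro m
  induction m with
  | zero =>
    intro k hk q hq ω _
    have : ω = 0 := by
      apply (Pi.basisFun R (Fin N)).ext_alternating
      intro v hv
      have := Fintype.card_le_of_injective v hv
      simp at this
      omega
    subst this
    exact ⟨0, fun v => by simp⟩
  | succ m ih =>
    intro k hk q hq ω hω
    have hkN : k < N := by omega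
    let k' : Fin N := ⟨k, hkN⟩
    set Y := Ideal.span (y '' {j | j.val < k}) with hY
    have hY1 : Ideal.span (y '' {j | j.val < k+1}) = Y ⊔ Ideal.span {y k'} := by
      rw [hY, ← Ideal.span_union, ← Set.image_singleton, ← Set.image_union]
      congr 2
      ext j
      simp [k', Fin.ext_iff]
      omega
    obtain ⟨c, hc⟩ := (Ideal.mem_span_range_iff_exists_fun).1 (hy k')
    let r : (Fin N → R) →ₗ[R] R := ∑ i, c i • LinearMap.proj i
    have hr : r g = y k' := by simp [r, ← hc]
    let h := AlternatingMap.alternatizeUncurryFin (r.smulRight ω)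
    have hh : ∀ v, h.curryLeft g v - y k' * ω v ∈ Y := by
      intro v
      rw [bk_homotopy, hr, sub_sub_cancel_left]
      apply neg_mem
      apply sum_mem
      intro i _
      exact Ideal.mul_mem_left _ _ (Ideal.mul_mem_left _ _ (hω _))
    obtain ⟨η, hη⟩ := ih (k+1) (by omega) (q+1) (by omega) h (by
      intro v
      rw [hY1]
      have := Submodule.add_mem _ (Submodule.mem_sup_left (T := Ideal.span {y k'}) (hh v))
        (Submodule.mem_sup_right (S := Y) (Ideal.mul_mem_right (ω v) _ (Ideal.mem_span_singleton_self (y k'))))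
      simpa using this)
    rw [hY1] at hη
    obtain ⟨ζ, hζ⟩ := bk_lift Y (y k') _ (h - η.curryLeft g) (by simpa using hη)
    refine ⟨ζ, fun v => ?_⟩
    apply hreg k'
    change _ ∈ Y
    have h1 := hζ (Matrix.vecCons g v)
    have h2 := hh v
    have h3 : (η.curryLeft g) (Matrix.vecCons g v) = 0 := by
      rw [← AlternatingMap.curryLeft_apply_apply, AlternatingMap.curryLeft_same]; rfl
    simp only [AlternatingMap.sub_apply, h3, sub_zero] at h1
    rw [AlternatingMap.curryLeft_apply_apply] at h2 ⊢
    have := Submodule.sub_mem _ h1 h2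
    convert this using 1
    ring

theorem bk_koszul (g y : Fin N → R) (hy : ∀ k, y k ∈ Ideal.span (Set.range g))
    (hreg : ∀ k : Fin N, ∀ P, y k * P ∈ Ideal.span (y '' {j | j.val < k.val}) →
      P ∈ Ideal.span (y '' {j | j.val < k.val}))
    (a : Fin N → R) (ha : ∑ i, a i * g i = 0) :
    ∃ b : Fin N → Fin N → R, (∀ i j, b i j = - b j i) ∧ ∀ i, a i = ∑ j, b i j * g j := by
  classical
  let l : (Fin N → R) →ₗ[R] R := ∑ i, a i • LinearMap.proj i
  let ω : (Fin N → R) [⋀^Fin 1]→ₗ[R] R := AlternatingMap.ofSubsingleton R (Fin N → R) R 0 l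
  obtain ⟨η, hη⟩ := bk_koszul_aux g y hy hreg N 0 (by simp) 0 le_rfl ω (by
    intro v
    have : ω.curryLeft g v = 0 := by
      rw [AlternatingMap.curryLeft_apply_apply]
      simp [ω, l, ha]
    rw [this]; exact zero_mem _)
  have hz : Ideal.span (y '' {j | j.val < 0}) = ⊥ := by simp
  rw [hz] at hη
  refine ⟨fun i j => η ![Pi.single j 1, Pi.single i 1], fun i j => ?_, fun i => ?_⟩
  · have := η.map_swap ![Pi.single i 1, Pi.single j 1] (i := 0) (j := 1) (by simp)
    rw [← this]
    change η _ = η _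
    congr 1
    funext k
    fin_cases k <;> simp
  · have := hη ![Pi.single i 1]
    rw [Ideal.mem_bot, sub_eq_zero] at this
    have h1 : ω ![Pi.single i 1] = a i := by simp [ω, l, Pi.single_apply]
    rw [h1] at this
    have hg : g = ∑ j, g j • (Pi.single j 1 : Fin N → R) := by
      funext k
      simp [Finset.sum_apply, Pi.single_apply]
    have h2 : ∀ s : Finset (Fin N), (η.curryLeft (∑ j ∈ s, g j • (Pi.single j 1 : Fin N → R)))
        ![Pi.single i 1] = ∑ j ∈ s, η ![Pi.single j 1, Pi.single i 1] * g j := by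
      intro s
      induction s using Finset.induction_on with
      | empty => simp
      | insert j s hj ih =>
        rw [Finset.sum_insert hj, Finset.sum_insert hj, map_add, AlternatingMap.add_apply, ih,
          map_smul, AlternatingMap.smul_apply, smul_eq_mul, mul_comm]
        rfl
    rw [this]
    conv_lhs => rw [hg]
    exact h2 _
end Koszul

section Filt
variable {N : ℕ}

/-- integer weight of an exponent -/
noncomputable def bkwt (α : Fin N → ℕ) (s : Fin N →₀ ℕ) : ℤ := ((Finsupp.weight α s : ℕ) : ℤ)

theorem bkwt_add (α : Fin N → ℕ) (s t : Fin N →₀ ℕ) : bkwt α (s + t) = bkwt α s + bkwt α t := by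
  simp [bkwt]

theorem bkwt_single (α : Fin N → ℕ) (i : Fin N) (k : ℕ) :
    bkwt α (Finsupp.single i k) = k * α i := by
  simp [bkwt, Finsupp.weight_single]

theorem bkwt_nonneg (α : Fin N → ℕ) (s : Fin N →₀ ℕ) : 0 ≤ bkwt α s := by simp [bkwt]

theorem bkwt_eq_sum (α : Fin N → ℕ) (s : Fin N →₀ ℕ) : bkwt α s = ∑ i, (s i : ℤ) * α i := by
  simp [bkwt, Finsupp.weight_eq_sum]

/-- polynomials supported in weights `A` -/
def bkS (α : Fin N → ℕ) (A : Set ℤ) : Submodule ℂ (MvPolynomial (Fin N) ℂ) where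
  carrier := {P | ∀ s, coeff s P ≠ 0 → bkwt α s ∈ A}
  add_mem' := by
    intro P Q hP hQ s hs
    by_cases h : coeff s P = 0
    · apply hQ s; intro h'; apply hs; simp [h, h']
    · exact hP s h
  zero_mem' := by intro s hs; simp at hs
  smul_mem' := by
    intro c P hP s hs
    apply hP s
    intro h; apply hs; simp [h]

theorem bkS_mem {α : Fin N → ℕ} {A : Set ℤ} {P : MvPolynomial (Fin N) ℂ} :
    P ∈ bkS α A ↔ ∀ s, coeff s P ≠ 0 → bkwt α s ∈ A := Iff.rfl

/-- filtration -/
abbrev bkF (α : Fin N → ℕ) (m : ℤ) : Submodule ℂ (MvPolynomial (Fin N) ℂ) := bkS α (Set.Iic m)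

theorem bkS_mono {α : Fin N → ℕ} {A B : Set ℤ} {P : MvPolynomial (Fin N) ℂ} (h : P ∈ bkS α A)
    (hAB : A ⊆ B) : P ∈ bkS α B := fun s hs => hAB (h s hs)

theorem bkF_mono {α : Fin N → ℕ} {a b : ℤ} {P : MvPolynomial (Fin N) ℂ} (h : P ∈ bkF α a)
    (hab : a ≤ b) : P ∈ bkF α b := bkS_mono h (Set.Iic_subset_Iic.2 hab)

theorem bkS_mul {α : Fin N → ℕ} {A B D : Set ℤ} {P Q : MvPolynomial (Fin N) ℂ} (hP : P ∈ bkS α A)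
    (hQ : Q ∈ bkS α B) (h : ∀ a ∈ A, ∀ b ∈ B, a + b ∈ D) : P * Q ∈ bkS α D := by
  intro s hs
  rw [coeff_mul] at hs
  obtain ⟨⟨u, v⟩, huv, hne⟩ := Finset.exists_ne_zero_of_sum_ne_zero hs
  rw [Finset.HasAntidiagonal.mem_antidiagonal] at huv
  rw [← huv, bkwt_add]
  exact h _ (hP _ (left_ne_zero_of_mul hne)) _ (hQ _ (right_ne_zero_of_mul hne))

theorem bkF_mul {α : Fin N → ℕ} {a b c : ℤ} {P Q : MvPolynomial (Fin N) ℂ} (hP : P ∈ bkF α a)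
    (hQ : Q ∈ bkF α b) (h : a + b ≤ c) : P * Q ∈ bkF α c :=
  bkS_mul hP hQ (fun x hx y hy => by
    simp only [Set.mem_Iic] at *; linarith)

theorem bkS_pderiv {α : Fin N → ℕ} {A B : Set ℤ} {P : MvPolynomial (Fin N) ℂ} (hP : P ∈ bkS α A)
    (i : Fin N) (h : ∀ a ∈ A, a - α i ∈ B) : pderiv i P ∈ bkS α B := by
  intro s hs
  rw [coeff_pderiv] at hs
  have := h _ (hP _ (left_ne_zero_of_mul hs))
  rw [bkwt_add, bkwt_single] at this
  simpa using this

theorem bkF_pderiv {α : Fin N → ℕ} {a b : ℤ} {P : MvPolynomial (Fin N) ℂ} (hP : P ∈ bkF α a)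
    (i : Fin N) (h : a - α i ≤ b) : pderiv i P ∈ bkF α b :=
  bkS_pderiv hP i (fun x hx => by simp only [Set.mem_Iic] at *; linarith)

theorem bkF_neg {α : Fin N → ℕ} {a : ℤ} {P : MvPolynomial (Fin N) ℂ} (hP : P ∈ bkF α a)
    (h : a < 0) : P = 0 := by
  ext s
  by_contra hs
  have h1 := hP s (by simpa using hs)
  have h2 := bkwt_nonneg α s
  simp only [Set.mem_Iic] at h1
  linarith

theorem bkS_monomial {α : Fin N → ℕ} {A : Set ℤ} (s : Fin N →₀ ℕ) (c : ℂ) (h : bkwt α s ∈ A) :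
    monomial s c ∈ bkS α A := by
  classical
  intro t ht
  rw [coeff_monomial] at ht
  split_ifs at ht with h1
  · rwa [← h1]
  · exact absurd rfl ht

theorem bkF_exists (α : Fin N → ℕ) (P : MvPolynomial (Fin N) ℂ) : ∃ m : ℕ, P ∈ bkF α m := by
  refine ⟨P.support.sup (fun s => Finsupp.weight α s), fun s hs => ?_⟩
  have : Finsupp.weight α s ≤ P.support.sup (fun s => Finsupp.weight α s) :=
    Finset.le_sup (f := fun s => Finsupp.weight α s) (mem_support_iff.2 hs)
  simp only [Set.mem_Iic, bkwt]
  exact_mod_cast this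

theorem bkF_exists_fam (α : Fin N → ℕ) {ι : Type*} [Fintype ι] (P : ι → MvPolynomial (Fin N) ℂ) :
    ∃ m : ℕ, ∀ i, P i ∈ bkF α m := by
  choose m hm using fun i => bkF_exists α (P i)
  refine ⟨Finset.univ.sup m, fun i => bkF_mono (hm i) ?_⟩
  exact_mod_cast Finset.le_sup (f := m) (Finset.mem_univ i)

open Classical in
/-- truncation -/
noncomputable def bkT (α : Fin N → ℕ) (A : Set ℤ) :
    MvPolynomial (Fin N) ℂ → MvPolynomial (Fin N) ℂ :=
  fun P => ∑ s ∈ P.support with bkwt α s ∈ A, monomial s (coeff s P)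

open Classical in
theorem bkT_coeff (α : Fin N → ℕ) (A : Set ℤ) (P : MvPolynomial (Fin N) ℂ) (s : Fin N →₀ ℕ) :
    coeff s (bkT α A P) = if bkwt α s ∈ A then coeff s P else 0 := by
  simp only [bkT, coeff_sum, coeff_monomial, Finset.sum_ite_eq', Finset.mem_filter,
    mem_support_iff]
  by_cases h : coeff s P = 0 <;> simp [h]

theorem bkT_mem (α : Fin N → ℕ) (A : Set ℤ) (P : MvPolynomial (Fin N) ℂ) :
    bkT α A P ∈ bkS α A := by
  intro s hs
  rw [bkT_coeff] at hs
  split_ifs at hs with h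
  · exact h
  · exact absurd rfl hs

theorem bkT_add (α : Fin N → ℕ) (A : Set ℤ) (P Q : MvPolynomial (Fin N) ℂ) :
    bkT α A (P + Q) = bkT α A P + bkT α A Q := by
  ext s
  simp only [bkT_coeff, coeff_add]
  split_ifs <;> simp

theorem bkT_neg (α : Fin N → ℕ) (A : Set ℤ) (P : MvPolynomial (Fin N) ℂ) :
    bkT α A (-P) = - bkT α A P := by
  ext s
  simp only [bkT_coeff, coeff_neg]
  split_ifs <;> simp

theorem bkT_smul (α : Fin N → ℕ) (A : Set ℤ) (c : ℂ) (P : MvPolynomial (Fin N) ℂ) :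
    bkT α A (c • P) = c • bkT α A P := by
  ext s
  simp only [bkT_coeff, coeff_smul]
  split_ifs <;> simp

theorem bkT_zero (α : Fin N → ℕ) (A : Set ℤ) : bkT α A 0 = 0 := by
  ext s
  simp [bkT_coeff]

theorem bkT_sum (α : Fin N → ℕ) (A : Set ℤ) {ι : Type*} (t : Finset ι)
    (P : ι → MvPolynomial (Fin N) ℂ) :
    bkT α A (∑ i ∈ t, P i) = ∑ i ∈ t, bkT α A (P i) := by
  classical
  induction t using Finset.induction_on with
  | empty => simp [bkT_zero]
  | insert a t ha ih => rw [Finset.sum_insert ha, Finset.sum_insert ha, bkT_add, ih]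

theorem bkT_eq {α : Fin N → ℕ} {A : Set ℤ} {P : MvPolynomial (Fin N) ℂ} (h : P ∈ bkS α A) :
    bkT α A P = P := by
  ext s
  rw [bkT_coeff]
  split_ifs with hs
  · rfl
  · by_contra h'
    exact hs (h s (Ne.symm h'))

theorem bkT_eq_zero {α : Fin N → ℕ} {A B : Set ℤ} {P : MvPolynomial (Fin N) ℂ} (h : P ∈ bkS α B)
    (hAB : ∀ a ∈ B, a ∉ A) : bkT α A P = 0 := by
  ext s
  rw [bkT_coeff]
  split_ifs with hs
  · by_contra h'
    exact hAB _ (h s (by simpa using h')) hs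
  · simp

theorem bkT_mul {α : Fin N → ℕ} {A B : Set ℤ} {e : ℤ} (P : MvPolynomial (Fin N) ℂ)
    {Q : MvPolynomial (Fin N) ℂ} (hQ : Q ∈ bkS α {e}) (hB : ∀ a, a ∈ B ↔ a + e ∈ A) :
    bkT α A (P * Q) = bkT α B P * Q := by
  classical
  ext s
  have key : ∀ x ∈ Finset.HasAntidiagonal.antidiagonal s, coeff x.1 (bkT α B P) * coeff x.2 Q =
      if bkwt α s ∈ A then coeff x.1 P * coeff x.2 Q else 0 := by
    rintro ⟨u, v⟩ huv
    rw [Finset.HasAntidiagonal.mem_antidiagonal] at huv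
    simp only at huv ⊢
    by_cases hv : coeff v Q = 0
    · simp [hv]
    · have h1 : bkwt α v = e := hQ v hv
      have h2 : bkwt α s = bkwt α u + e := by rw [← huv, bkwt_add, h1]
      rw [bkT_coeff, h2, ← hB]
      split_ifs <;> simp
  rw [bkT_coeff, coeff_mul, coeff_mul, Finset.sum_congr rfl key]
  split_ifs <;> simp

theorem bk_coeff_X_pderiv (i : Fin N) (P : MvPolynomial (Fin N) ℂ) (s : Fin N →₀ ℕ) :
    coeff s (X i * pderiv i P) = (s i : ℂ) * coeff s P := by
  rw [coeff_X_mul']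
  split_ifs with h
  · rw [coeff_pderiv]
    have h1 : s i ≠ 0 := Finsupp.mem_support_iff.1 h
    have h2 : s - Finsupp.single i 1 + Finsupp.single i 1 = s := by
      apply tsub_add_cancel_of_le
      simp
      omega
    rw [h2, mul_comm]
    congr 1
    have : (s - Finsupp.single i 1 : Fin N →₀ ℕ) i + 1 = s i := by simp; omega
    exact_mod_cast this
  · have h1 : s i = 0 := by simpa using h
    simp [h1]

theorem bk_euler {α : Fin N → ℕ} {e : ℤ} {P : MvPolynomial (Fin N) ℂ} (hP : P ∈ bkS α {e}) :
    ∑ i, (α i : ℂ) • (X i * pderiv i P) = (e : ℂ) • P := by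
  ext s
  simp only [coeff_sum, coeff_smul, bk_coeff_X_pderiv, smul_eq_mul]
  by_cases h : coeff s P = 0
  · simp [h]
  · have h1 : bkwt α s = e := hP s h
    rw [← h1, bkwt_eq_sum]
    push_cast
    rw [Finset.sum_mul]
    apply Finset.sum_congr rfl
    intros
    ring

theorem bk_div_euler {α : Fin N → ℕ} (P : MvPolynomial (Fin N) ℂ) :
    ∑ i, pderiv i ((α i : ℂ) • (X i * P)) =
      (∑ i, (α i : ℂ)) • P + ∑ i, (α i : ℂ) • (X i * pderiv i P) := by
  rw [Finset.sum_smul, ← Finset.sum_add_distrib]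
  apply Finset.sum_congr rfl
  intro i _
  rw [Derivation.map_smul, pderiv_mul, pderiv_X_self, one_mul, smul_add]

theorem bk_euler_inv {α : Fin N → ℕ} (hα : 0 < ∑ i, α i) (m : ℤ) (Q : MvPolynomial (Fin N) ℂ)
    (hQ : Q ∈ bkF α m) :
    ∃ b ∈ bkF α m, ∑ i, pderiv i ((α i : ℂ) • (X i * b)) = Q := by
  let b : MvPolynomial (Fin N) ℂ := ∑ s ∈ Q.support,
    monomial s (coeff s Q / ((∑ i, (α i : ℂ)) + (bkwt α s : ℂ)))
  refine ⟨b, ?_, ?_⟩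
  · apply sum_mem
    intro s hs
    exact bkS_monomial _ _ (hQ s (mem_support_iff.1 hs))
  · rw [bk_div_euler]
    ext s
    classical
    have hb : coeff s b = coeff s Q / ((∑ i, (α i : ℂ)) + (bkwt α s : ℂ)) := by
      simp only [b, coeff_sum, coeff_monomial, Finset.sum_ite_eq', mem_support_iff]
      by_cases h : coeff s Q = 0 <;> simp [h]
    simp only [coeff_add, coeff_sum, coeff_smul, bk_coeff_X_pderiv, smul_eq_mul]
    have h1 : ∑ i, (α i : ℂ) * ((s i : ℂ) * coeff s b) = (bkwt α s : ℂ) * coeff s b := by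
      rw [bkwt_eq_sum]
      push_cast
      rw [Finset.sum_mul]
      apply Finset.sum_congr rfl
      intros
      ring
    rw [h1, ← add_mul, hb]
    apply mul_div_cancel₀
    have h2 : 0 < (∑ i, (α i : ℤ)) + bkwt α s := by
      have := bkwt_nonneg α s
      have : (0:ℤ) < ∑ i, (α i : ℤ) := by exact_mod_cast hα
      linarith
    have h3 : (((∑ i, (α i : ℤ)) + bkwt α s : ℤ) : ℂ) ≠ 0 := by exact_mod_cast h2.ne'
    push_cast at h3
    exact h3

theorem bk_pderiv_comm (i j : Fin N) (P : MvPolynomial (Fin N) ℂ) :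
    pderiv i (pderiv j P) = pderiv j (pderiv i P) := by
  classical
  ext s
  simp only [coeff_pderiv, Finsupp.add_apply]
  rw [add_right_comm]
  by_cases h : i = j
  · subst h; rfl
  · rw [Finsupp.single_eq_of_ne (by tauto), Finsupp.single_eq_of_ne (by tauto)]
    push_cast
    ring

theorem bk_antideriv (i j : Fin N) (hij : i ≠ j) (Q : MvPolynomial (Fin N) ℂ) :
    ∃ h, pderiv i h = Q ∧ (pderiv j Q = 0 → pderiv j h = 0) := by
  refine ⟨∑ s ∈ Q.support, monomial (s + Finsupp.single i 1) (coeff s Q / ((s i : ℂ) + 1)), ?_, ?_⟩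
  · rw [map_sum]
    conv_rhs => rw [← support_sum_monomial_coeff Q]
    apply Finset.sum_congr rfl
    intro s _
    rw [pderiv_monomial]
    congr 1
    · simp
    · have : (s i : ℂ) + 1 ≠ 0 := by exact_mod_cast Nat.succ_ne_zero (s i)
      simp
      field_simp
  · intro hQ
    rw [map_sum]
    apply Finset.sum_eq_zero
    intro s hs
    have hsj : s j = 0 := by
      by_contra h
      have h1 := congrArg (fun P => coeff s (X j * P)) hQ
      simp only [bk_coeff_X_pderiv, mul_zero, coeff_zero, mul_eq_zero] at h1
      rcases h1 with h1 | h1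
      · exact h (by exact_mod_cast h1)
      · exact (mem_support_iff.1 hs) h1
    rw [pderiv_monomial]
    simp [hsj, hij]

theorem bk_mono_reg (M : ℕ) (k : Fin N) (P : MvPolynomial (Fin N) ℂ)
    (h : (monomial (Finsupp.single k M) (1:ℂ)) * P ∈
      Ideal.span ((fun i => monomial (Finsupp.single i M) (1:ℂ)) '' {j : Fin N | j.val < k.val})) :
    P ∈ Ideal.span ((fun i => monomial (Finsupp.single i M) (1:ℂ)) '' {j : Fin N | j.val < k.val}) := by
  have e : ((fun i => monomial (Finsupp.single i M) (1:ℂ)) '' {j : Fin N | j.val < k.val}) =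
    (fun s => monomial s (1:ℂ)) '' ((fun i => Finsupp.single i M) '' {j : Fin N | j.val < k.val}) := by
    rw [Set.image_image]
  rw [e] at h ⊢
  rw [mem_ideal_span_monomial_image] at h ⊢
  intro s hs
  obtain ⟨t, ⟨j, hj, rfl⟩, ht⟩ := h (Finsupp.single k M + s) (by
    rw [mem_support_iff, coeff_monomial_mul, one_mul]
    exact mem_support_iff.1 hs)
  refine ⟨_, ⟨j, hj, rfl⟩, ?_⟩
  have hjk : k ≠ j := by
    rintro rfl
    simp at hj
  simp only [Finsupp.single_le_iff] at ht ⊢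
  rw [Finsupp.add_apply, Finsupp.single_eq_of_ne (by tauto), zero_add] at ht
  exact ht
end Filt

section Main
variable {n : ℕ}

/-- the data of a strongly tame polynomial, in elementary form -/
structure BKD (α : Fin (n+1) → ℕ) (f g : MvPolynomial (Fin (n+1)) ℂ) (d : ℤ)
    (I : Finset (Fin (n+1) →₀ ℕ)) : Prop where
  hn : 1 ≤ n
  αpos : ∀ i, 0 < α i
  dpos : 0 < d
  gH : g ∈ bkS α {d}
  fg : f - g ∈ bkF α (d - 1)
  hspan : ∀ P : MvPolynomial (Fin (n+1)) ℂ, ∃ (c : {β // β ∈ I} → ℂ)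
    (a : Fin (n+1) → MvPolynomial (Fin (n+1)) ℂ),
    P = ∑ β, c β • monomial β.1 (1:ℂ) + ∑ i, a i * pderiv i g
  hind : ∀ (c : {β // β ∈ I} → ℂ) (a : Fin (n+1) → MvPolynomial (Fin (n+1)) ℂ),
    ∑ β, c β • monomial β.1 (1:ℂ) = ∑ i, a i * pderiv i g → ∀ β, c β = 0

variable {α : Fin (n+1) → ℕ} {f g : MvPolynomial (Fin (n+1)) ℂ} {d : ℤ}
    {I : Finset (Fin (n+1) →₀ ℕ)}

theorem BKD.gi (H : BKD α f g d I) (i : Fin (n+1)) : pderiv i g ∈ bkS α {d - α i} :=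
  bkS_pderiv H.gH i (by simp)

theorem BKD.fgi (H : BKD α f g d I) (i : Fin (n+1)) :
    pderiv i f - pderiv i g ∈ bkF α (d - 1 - α i) := by
  rw [← map_sub]
  exact bkF_pderiv H.fg i le_rfl

theorem BKD.giF (H : BKD α f g d I) (i : Fin (n+1)) : pderiv i g ∈ bkF α (d - α i) :=
  bkS_mono (H.gi i) (by simp)

open Classical in
theorem bkT_comb (A : Set ℤ) (c : {β // β ∈ I} → ℂ) :
    bkT α A (∑ β, c β • monomial β.1 (1:ℂ)) =
      ∑ β : {β // β ∈ I}, (if bkwt α β.1 ∈ A then c β else 0) • monomial β.1 (1:ℂ) := by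
  rw [bkT_sum]
  apply Finset.sum_congr rfl
  intro β _
  rw [bkT_smul]
  split_ifs with h
  · rw [bkT_eq (bkS_monomial _ _ h)]
  · rw [bkT_eq_zero (B := {bkwt α β.1}) (bkS_monomial _ _ rfl) (by simpa using h)]
    simp

theorem BKD.bkT_gi (H : BKD α f g d I) (A : Set ℤ)
    (a : Fin (n+1) → MvPolynomial (Fin (n+1)) ℂ) :
    bkT α A (∑ i, a i * pderiv i g) =
      ∑ i, bkT α {w | w + (d - α i) ∈ A} (a i) * pderiv i g := by
  rw [bkT_sum]
  apply Finset.sum_congr rfl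
  intro i _
  exact bkT_mul _ (H.gi i) (by intro a; rfl)

theorem BKD.division (H : BKD α f g d I) (A : Set ℤ) (P : MvPolynomial (Fin (n+1)) ℂ)
    (hP : P ∈ bkS α A) :
    ∃ (c : {β // β ∈ I} → ℂ) (a : Fin (n+1) → MvPolynomial (Fin (n+1)) ℂ),
      (∀ β, c β ≠ 0 → bkwt α β.1 ∈ A) ∧ (∀ i, a i ∈ bkS α {w | w + (d - α i) ∈ A}) ∧
      P = ∑ β, c β • monomial β.1 (1:ℂ) + ∑ i, a i * pderiv i g := by
  classical
  obtain ⟨c, a, h⟩ := H.hspan P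
  refine ⟨fun β => if bkwt α β.1 ∈ A then c β else 0,
    fun i => bkT α {w | w + (d - α i) ∈ A} (a i), ?_, fun i => bkT_mem _ _ _, ?_⟩
  · intro β hβ
    by_contra h'
    simp [h'] at hβ
  · rw [← bkT_comb, ← H.bkT_gi, ← bkT_add, ← h, bkT_eq hP]

theorem BKD.divisionF (H : BKD α f g d I) (m : ℤ) (P : MvPolynomial (Fin (n+1)) ℂ)
    (hP : P ∈ bkF α m) :
    ∃ (c : {β // β ∈ I} → ℂ) (a : Fin (n+1) → MvPolynomial (Fin (n+1)) ℂ),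
      (∀ β, c β ≠ 0 → bkwt α β.1 ≤ m) ∧ (∀ i, a i ∈ bkF α (m - d + α i)) ∧
      P = ∑ β, c β • monomial β.1 (1:ℂ) + ∑ i, a i * pderiv i g := by
  obtain ⟨c, a, h1, h2, h3⟩ := H.division _ P hP
  refine ⟨c, a, h1, fun i => bkS_mono (h2 i) ?_, h3⟩
  intro w hw
  simp only [Set.mem_ofPred_eq, Set.mem_Iic] at *
  linarith

theorem BKD.powers (H : BKD α f g d I) :
    ∃ M : ℕ, ∀ i, monomial (Finsupp.single i M) (1:ℂ) ∈
      Ideal.span (Set.range fun i => pderiv i g) := by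
  let M := I.sup (fun s => Finsupp.weight α s) + 1
  refine ⟨M, fun i => ?_⟩
  obtain ⟨c, a, h1, h2, h3⟩ := H.division {(M:ℤ) * α i} (monomial (Finsupp.single i M) (1:ℂ))
    (bkS_monomial _ _ (by simp [bkwt_single]))
  have hc : ∀ β, c β = 0 := by
    intro β
    by_contra h
    have h4 := h1 β h
    have h5 : Finsupp.weight α β.1 ≤ I.sup (fun s => Finsupp.weight α s) :=
      Finset.le_sup (f := fun s => Finsupp.weight α s) β.2
    simp only [Set.mem_singleton_iff, bkwt] at h4
    have h6 : Finsupp.weight α β.1 = M * α i := by exact_mod_cast h4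
    have := Nat.le_mul_of_pos_right M (H.αpos i)
    omega
  rw [h3]
  simp only [hc, zero_smul, Finset.sum_const_zero, zero_add]
  apply sum_mem
  intro j _
  exact Ideal.mul_mem_left _ _ (Ideal.subset_span ⟨j, rfl⟩)

theorem BKD.koszul (H : BKD α f g d I) (a : Fin (n+1) → MvPolynomial (Fin (n+1)) ℂ)
    (ha : ∑ i, a i * pderiv i g = 0) :
    ∃ b : Fin (n+1) → Fin (n+1) → MvPolynomial (Fin (n+1)) ℂ,
      (∀ i j, b i j = - b j i) ∧ ∀ i, a i = ∑ j, b i j * pderiv j g := by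
  obtain ⟨M, hM⟩ := H.powers
  exact bk_koszul (fun i => pderiv i g) (fun i => monomial (Finsupp.single i M) (1:ℂ)) hM
    (fun k P h => bk_mono_reg M k P h) a ha

theorem BKD.koszulF (H : BKD α f g d I) (m : ℤ) (a : Fin (n+1) → MvPolynomial (Fin (n+1)) ℂ)
    (ha : ∀ i, a i ∈ bkF α (m - d + α i)) (hs : ∑ i, a i * pderiv i g ∈ bkF α (m - 1)) :
    ∃ b : Fin (n+1) → Fin (n+1) → MvPolynomial (Fin (n+1)) ℂ,
      (∀ i j, b i j = - b j i) ∧ (∀ i j, b i j ∈ bkF α (m - 2 * d + α i + α j)) ∧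
      ∀ i, a i - ∑ j, b i j * pderiv j g ∈ bkF α (m - 1 - d + α i) := by
  have h0 : ∑ i, bkT α {w | w + (d - α i) ∈ ({m} : Set ℤ)} (a i) * pderiv i g = 0 := by
    rw [← H.bkT_gi]
    exact bkT_eq_zero hs (by intro x hx; simp at *; omega)
  obtain ⟨b, hb, hab⟩ := H.koszul _ h0
  refine ⟨fun i j => bkT α {m - 2 * d + α i + α j} (b i j), fun i j => ?_, fun i j => ?_, fun i => ?_⟩
  · simp only
    rw [hb i j, bkT_neg, add_right_comm]
  · exact bkS_mono (bkT_mem _ _ _) (by simp)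
  · have h1 : ∑ j, bkT α {m - 2 * d + α i + α j} (b i j) * pderiv j g =
        bkT α {w | w + (d - α i) ∈ ({m} : Set ℤ)} (a i) := by
      have h2 := congrArg (bkT α {w | w + (d - α i) ∈ ({m} : Set ℤ)}) (hab i)
      rw [bkT_eq (bkT_mem _ _ _), H.bkT_gi] at h2
      rw [h2]
      apply Finset.sum_congr rfl
      intro j _
      congr 2
      ext w
      simp
      omega
    simp only [h1]
    intro s hs'
    rw [coeff_sub, bkT_coeff] at hs'
    have h3 : coeff s (a i) ≠ 0 := by
      intro h; rw [h] at hs'; simp at hs'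
    have h4 := ha i s h3
    split_ifs at hs' with h5
    · simp at hs'
    · simp at h4 h5 ⊢
      omega

/-- the twisted differential -/
noncomputable def bkD (f : MvPolynomial (Fin (n+1)) ℂ) (u : ℂ) (i : Fin (n+1)) :
    MvPolynomial (Fin (n+1)) ℂ →ₗ[ℂ] MvPolynomial (Fin (n+1)) ℂ :=
  LinearMap.mulLeft ℂ (pderiv i f) - u • (pderiv i).toLinearMap

theorem bkD_apply (f : MvPolynomial (Fin (n+1)) ℂ) (u : ℂ) (i : Fin (n+1))
    (a : MvPolynomial (Fin (n+1)) ℂ) : bkD f u i a = pderiv i f * a - u • pderiv i a := by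
  simp [bkD]

theorem bkD_comm (f : MvPolynomial (Fin (n+1)) ℂ) (u : ℂ) (i j : Fin (n+1))
    (a : MvPolynomial (Fin (n+1)) ℂ) : bkD f u i (bkD f u j a) = bkD f u j (bkD f u i a) := by
  simp only [bkD_apply, map_sub, pderiv_C, pderiv_mul, bk_pderiv_comm i j,
    MvPolynomial.smul_eq_C_mul]
  ring

theorem BKD.twisted (H : BKD α f g d I) (u : ℂ) : ∀ k : ℕ, ∀ m : ℤ, m - d + ∑ i, (α i : ℤ) < k →
    ∀ (a : Fin (n+1) → MvPolynomial (Fin (n+1)) ℂ) (_ : ∀ i, a i ∈ bkF α (m - d + α i))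
      (c : {β // β ∈ I} → ℂ) (_ : ∑ β, c β • monomial β.1 (1:ℂ) = ∑ i, bkD f u i (a i)),
      ∀ β, c β = 0 := by
  classical
  intro k
  induction k with
  | zero =>
    intro m hm a ha c hc
    have h0 : ∀ i, a i = 0 := by
      intro i
      apply bkF_neg (ha i)
      have : (α i : ℤ) ≤ ∑ i, (α i : ℤ) :=
        Finset.single_le_sum (f := fun i => (α i : ℤ)) (fun _ _ => by positivity) (Finset.mem_univ i)
      push_cast at hm
      linarith
    apply H.hind c 0
    simpa [h0] using hc
  | succ k ih =>
    intro m hm a ha c hc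
    have hd := H.dpos
    have e1 : ∑ i, bkD f u i (a i) = ∑ i, a i * pderiv i g +
        ∑ i, ((pderiv i f - pderiv i g) * a i - u • pderiv i (a i)) := by
      rw [← Finset.sum_add_distrib]
      apply Finset.sum_congr rfl
      intro i _
      rw [bkD_apply]
      ring
    have hE : ∑ i, ((pderiv i f - pderiv i g) * a i - u • pderiv i (a i)) ∈ bkF α (m - 1) := by
      apply sum_mem
      intro i _
      apply Submodule.sub_mem
      · exact bkF_mul (H.fgi i) (ha i) (by linarith)
      · apply Submodule.smul_mem
        exact bkF_pderiv (ha i) i (by linarith)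
    have hcz : ∀ β : {β // β ∈ I}, m ≤ bkwt α β.1 → c β = 0 := by
      intro β hβ
      have h1 := congrArg (bkT α (Set.Ici m)) hc
      rw [bkT_comb, e1, bkT_add, bkT_eq_zero hE (by intro x hx; simp at *; omega), add_zero,
        H.bkT_gi] at h1
      have h2 := H.hind _ _ h1 β
      simpa [hβ] using h2
    have hL : ∑ β, c β • monomial β.1 (1:ℂ) ∈ bkF α (m - 1) := by
      apply sum_mem
      intro β _
      by_cases h : m ≤ bkwt α β.1
      · rw [hcz β h, zero_smul]; exact zero_mem _
      · apply Submodule.smul_mem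
        apply bkS_monomial
        simp; omega
    have hG : ∑ i, a i * pderiv i g ∈ bkF α (m - 1) := by
      have := Submodule.sub_mem _ hL hE
      rwa [hc, e1, add_sub_cancel_right] at this
    obtain ⟨b, hb, hbF, hab⟩ := H.koszulF m a ha hG
    refine ih (m - 1) (by push_cast at hm; linarith) (fun i => a i - ∑ j, bkD f u j (b i j)) ?_ c ?_
    · intro i
      have e2 : a i - ∑ j, bkD f u j (b i j) = (a i - ∑ j, b i j * pderiv j g)
          - ∑ j, ((pderiv j f - pderiv j g) * b i j - u • pderiv j (b i j)) := by
        rw [sub_sub, ← Finset.sum_add_distrib]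
        congr 1
        apply Finset.sum_congr rfl
        intro j _
        rw [bkD_apply]
        ring
      simp only [e2]
      apply Submodule.sub_mem _ (hab i)
      apply sum_mem
      intro j _
      apply Submodule.sub_mem
      · exact bkF_mul (H.fgi j) (hbF i j) (by linarith)
      · apply Submodule.smul_mem
        exact bkF_pderiv (hbF i j) j (by linarith)
    · rw [hc]
      simp only [map_sub, map_sum, Finset.sum_sub_distrib]
      have : ∑ i, ∑ j, bkD f u i (bkD f u j (b i j)) = 0 := by
        have h1 : ∑ i, ∑ j, bkD f u i (bkD f u j (b i j)) =
            - ∑ i, ∑ j, bkD f u i (bkD f u j (b i j)) := by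
          conv_lhs => rw [Finset.sum_comm]
          rw [← Finset.sum_neg_distrib]
          apply Finset.sum_congr rfl
          intro i _
          rw [← Finset.sum_neg_distrib]
          apply Finset.sum_congr rfl
          intro j _
          rw [bkD_comm, hb j i, map_neg, map_neg]
        exact self_eq_neg.1 h1
      rw [this, sub_zero]

/-- image of twisted differential -/
noncomputable def bkW (f : MvPolynomial (Fin (n+1)) ℂ) (u : ℂ) :
    Submodule ℂ (MvPolynomial (Fin (n+1)) ℂ) :=
  LinearMap.range (∑ i, (bkD f u i) ∘ₗ (LinearMap.proj i :
    (Fin (n+1) → MvPolynomial (Fin (n+1)) ℂ) →ₗ[ℂ] MvPolynomial (Fin (n+1)) ℂ))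

theorem bkW_mem {u : ℂ} {P : MvPolynomial (Fin (n+1)) ℂ} :
    P ∈ bkW f u ↔ ∃ a : Fin (n+1) → MvPolynomial (Fin (n+1)) ℂ, ∑ i, bkD f u i (a i) = P := by
  simp [bkW]

theorem BKD.indW (H : BKD α f g d I) (u : ℂ) (c : {β // β ∈ I} → ℂ)
    (hc : ∑ β, c β • monomial β.1 (1:ℂ) ∈ bkW f u) : ∀ β, c β = 0 := by
  obtain ⟨a, ha⟩ := bkW_mem.1 hc
  obtain ⟨m, hm⟩ := bkF_exists_fam α a
  have := H.dpos
  refine H.twisted u (m + ∑ i, α i + 1) (m + d) ?_ a (fun i => bkF_mono (hm i) ?_) c ha.symm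
  · push_cast; linarith
  · have : (0:ℤ) ≤ α i := by positivity
    linarith


/-- families with a reduction of bounded degree -/
def bkL (α : Fin (n+1) → ℕ) (f : MvPolynomial (Fin (n+1)) ℂ) (d : ℤ)
    (I : Finset (Fin (n+1) →₀ ℕ)) (m : ℤ) (P : ℂ → MvPolynomial (Fin (n+1)) ℂ) : Prop :=
  ∃ q : {β // β ∈ I} → Polynomial ℂ,
    (∀ β j, (q β).coeff j ≠ 0 → j * d + bkwt α β.1 ≤ m) ∧
    ∀ u, P u - ∑ β, (q β).eval u • monomial β.1 (1:ℂ) ∈ bkW f u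

theorem bkL_mono {m m' : ℤ} {P : ℂ → MvPolynomial (Fin (n+1)) ℂ} (h : bkL α f d I m P)
    (hm : m ≤ m') : bkL α f d I m' P := by
  obtain ⟨q, h1, h2⟩ := h
  exact ⟨q, fun β j hj => (h1 β j hj).trans hm, h2⟩

theorem bkL_congr {m : ℤ} {P Q : ℂ → MvPolynomial (Fin (n+1)) ℂ} (h : bkL α f d I m P)
    (hPQ : ∀ u, Q u - P u ∈ bkW f u) : bkL α f d I m Q := by
  obtain ⟨q, h1, h2⟩ := h
  refine ⟨q, h1, fun u => ?_⟩
  have := Submodule.add_mem _ (hPQ u) (h2 u)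
  rwa [sub_add_sub_cancel] at this

theorem bkL_zero {m : ℤ} : bkL α f d I m (fun _ => 0) :=
  ⟨fun _ => 0, by simp, by simp⟩

theorem bkL_add {m : ℤ} {P Q : ℂ → MvPolynomial (Fin (n+1)) ℂ} (hP : bkL α f d I m P)
    (hQ : bkL α f d I m Q) : bkL α f d I m (fun u => P u + Q u) := by
  obtain ⟨q, h1, h2⟩ := hP
  obtain ⟨q', h1', h2'⟩ := hQ
  refine ⟨fun β => q β + q' β, fun β j hj => ?_, fun u => ?_⟩
  · by_cases h : (q β).coeff j = 0
    · apply h1'; intro h'; apply hj; simp [h, h']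
    · exact h1 _ _ h
  · have := Submodule.add_mem _ (h2 u) (h2' u)
    convert this using 1
    simp only [Polynomial.eval_add, add_smul, Finset.sum_add_distrib]
    abel

theorem bkL_smul {m : ℤ} {P : ℂ → MvPolynomial (Fin (n+1)) ℂ} (c : ℂ) (hP : bkL α f d I m P) :
    bkL α f d I m (fun u => c • P u) := by
  obtain ⟨q, h1, h2⟩ := hP
  refine ⟨fun β => c • q β, fun β j hj => ?_, fun u => ?_⟩
  · apply h1 β j
    intro h; apply hj; simp [h]
  · have := Submodule.smul_mem _ c (h2 u)
    convert this using 1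
    simp only [Polynomial.eval_smul, smul_sub, Finset.smul_sum, smul_assoc]

theorem bkL_u {m : ℤ} {P : ℂ → MvPolynomial (Fin (n+1)) ℂ} (hP : bkL α f d I m P) :
    bkL α f d I (m + d) (fun u => u • P u) := by
  obtain ⟨q, h1, h2⟩ := hP
  refine ⟨fun β => Polynomial.X * q β, fun β j hj => ?_, fun u => ?_⟩
  · cases j with
    | zero => simp at hj
    | succ j =>
      rw [Polynomial.coeff_X_mul] at hj
      have := h1 β j hj
      push_cast
      linarith
  · have := Submodule.smul_mem _ u (h2 u)
    convert this using 1
    simp only [Polynomial.eval_mul, Polynomial.eval_X, smul_sub, Finset.smul_sum, mul_smul]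

theorem bkL_sum {ι : Type*} (t : Finset ι) {m : ℤ} {P : ι → ℂ → MvPolynomial (Fin (n+1)) ℂ}
    (hP : ∀ i ∈ t, bkL α f d I m (P i)) : bkL α f d I m (fun u => ∑ i ∈ t, P i u) := by
  classical
  induction t using Finset.induction_on with
  | empty => simpa using bkL_zero
  | insert a t ha ih =>
    simp only [Finset.sum_insert ha]
    exact bkL_add (hP a (Finset.mem_insert_self _ _))
      (ih (fun i hi => hP i (Finset.mem_insert_of_mem hi)))

theorem bkL_comb {m : ℤ} (c : {β // β ∈ I} → ℂ) (hc : ∀ β, c β ≠ 0 → bkwt α β.1 ≤ m) :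
    bkL α f d I m (fun _ => ∑ β, c β • monomial β.1 (1:ℂ)) := by
  refine ⟨fun β => Polynomial.C (c β), fun β j hj => ?_, by simp⟩
  rw [Polynomial.coeff_C] at hj
  split_ifs at hj with h
  · subst h
    simpa using hc β hj
  · exact absurd rfl hj

theorem BKD.red (H : BKD α f g d I) : ∀ k : ℕ, ∀ m : ℤ, m < k → ∀ P ∈ bkF α m,
    bkL α f d I m (fun _ => P) := by
  intro k
  induction k with
  | zero =>
    intro m hm P hP
    rw [bkF_neg hP (by simpa using hm)]
    exact bkL_zero
  | succ k ih =>
    intro m hm P hP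
    have hd := H.dpos
    push_cast at hm
    obtain ⟨c, a, h1, h2, h3⟩ := H.divisionF m P hP
    have hdiv : ∑ i, pderiv i (a i) ∈ bkF α (m - d) :=
      sum_mem (fun i _ => bkF_pderiv (h2 i) i (by linarith))
    have hE : ∑ i, a i * (pderiv i g - pderiv i f) ∈ bkF α (m - 1) := by
      apply sum_mem
      intro i _
      rw [← neg_sub (pderiv i f), mul_neg]
      apply neg_mem
      exact bkF_mul (h2 i) (H.fgi i) (by linarith)
    have L1 := bkL_u (ih (m - d) (by linarith) _ hdiv)
    have L2 := ih (m - 1) (by linarith) _ hE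
    have L3 := bkL_comb (f := f) (d := d) c h1
    rw [sub_add_cancel] at L1
    refine bkL_congr (bkL_add (bkL_add L3 L1) (bkL_mono L2 (by linarith))) (fun u => ?_)
    rw [bkW_mem]
    refine ⟨a, ?_⟩
    simp only [bkD_apply, h3, Finset.smul_sum, Finset.sum_sub_distrib, mul_sub]
    simp only [mul_comm (a _)]
    abel

theorem BKD.red' (H : BKD α f g d I) (m : ℤ) (P : MvPolynomial (Fin (n+1)) ℂ) (hP : P ∈ bkF α m) :
    bkL α f d I m (fun _ => P) :=
  H.red (m.toNat + 1) m (by have := Int.self_le_toNat m; push_cast; linarith) P hP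

theorem BKD.gpow (H : BKD α f g d I) (k : ℕ) (s : Fin (n+1) →₀ ℕ) :
    g ^ k * monomial s (1:ℂ) ∈ bkS α {k * d + bkwt α s} := by
  induction k with
  | zero => simpa using bkS_monomial (A := {bkwt α s}) s 1 rfl
  | succ k ih =>
    rw [pow_succ', mul_assoc]
    refine bkS_mul H.gH ih ?_
    simp
    ring

theorem BKD.lead (H : BKD α f g d I) (β : {β // β ∈ I}) (k : ℕ) :
    ∃ κ : ℂ, κ ≠ 0 ∧ bkL α f d I (k * d + bkwt α β.1 - 1)
      (fun u => g ^ k * monomial β.1 (1:ℂ) - (κ * u ^ k) • monomial β.1 (1:ℂ)) := by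
  induction k with
  | zero => exact ⟨1, one_ne_zero, by simpa using bkL_zero⟩
  | succ k ih =>
    obtain ⟨κ, hκ, hL⟩ := ih
    have hd := H.dpos
    have hdC : (d : ℂ) ≠ 0 := by exact_mod_cast hd.ne'
    set Q := g ^ k * monomial β.1 (1:ℂ) with hQ
    set m : ℤ := k * d + bkwt α β.1 with hm
    have hQm : Q ∈ bkS α {m} := H.gpow k β.1
    set r : ℂ := (∑ i, (α i : ℂ) + (m : ℂ)) / d with hr
    have hr0 : r ≠ 0 := by
      apply div_ne_zero _ hdC
      have h1 : (0:ℤ) < ∑ i, (α i : ℤ) := by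
        apply Finset.sum_pos
        · intro i _; exact_mod_cast H.αpos i
        · exact Finset.univ_nonempty
      have h2 : (0:ℤ) < ∑ i, (α i : ℤ) + m := by
        have := bkwt_nonneg α β.1
        have : 0 ≤ (k:ℤ) * d := by positivity
        linarith
      have h3 : ((∑ i, (α i : ℤ) + m : ℤ) : ℂ) ≠ 0 := by exact_mod_cast h2.ne'
      push_cast at h3
      exact h3
    let E := ∑ i, (pderiv i f - pderiv i g) * ((α i : ℂ) • (X i * Q))
    have hE : E ∈ bkF α (m + d - 1) := by
      apply sum_mem
      intro i _
      apply bkF_mul (b := α i + m) (H.fgi i)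
      · apply Submodule.smul_mem
        apply bkF_mul (a := α i) (b := m) _ _ le_rfl
        · exact bkS_monomial _ _ (by simp [bkwt_single])
        · exact bkS_mono hQm (by simp)
      · linarith
    have key : ∀ u : ℂ, ∑ i, bkD f u i ((α i : ℂ) • (X i * Q)) = (d:ℂ) • (g * Q) + E
        - (u * (d * r)) • Q := by
      intro u
      have h1 : (d:ℂ) * r = ∑ i, (α i : ℂ) + (m : ℂ) := by rw [hr]; field_simp
      have h2 := bk_div_euler (α := α) Q
      rw [bk_euler hQm, ← add_smul, ← h1] at h2
      have h3 := congrArg (· * Q) (bk_euler H.gH)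
      simp only [Finset.sum_mul, smul_mul_assoc] at h3
      rw [← h3, mul_smul, ← h2, Finset.smul_sum]
      simp only [E, ← Finset.sum_add_distrib, ← Finset.sum_sub_distrib]
      apply Finset.sum_congr rfl
      intro i _
      rw [bkD_apply]
      simp only [MvPolynomial.smul_eq_C_mul]
      ring
    refine ⟨κ * r, mul_ne_zero hκ hr0, ?_⟩
    have L1 := bkL_smul r (bkL_u hL)
    have L2 := bkL_smul (-(d:ℂ)⁻¹) (H.red' _ E hE)
    refine bkL_congr (bkL_mono (bkL_add L1 (bkL_mono L2 (by linarith))) (le_of_eq ?_)) (fun u => ?_)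
    · simp only [hm]; push_cast; ring
    · have h4 : ∑ i, bkD f u i ((α i : ℂ) • (X i * Q)) ∈ bkW f u := bkW_mem.2 ⟨_, rfl⟩
      rw [key u] at h4
      have h5 := Submodule.smul_mem _ ((d:ℂ)⁻¹) h4
      convert h5 using 1
      rw [pow_succ', mul_assoc, ← hQ]
      simp only [smul_sub, smul_add, smul_smul, inv_mul_cancel₀ hdC, one_smul, neg_smul]
      have e1 : (d:ℂ)⁻¹ * (u * (d * r)) = r * u := by field_simp
      rw [e1]
      have e2 : κ * r * u ^ (k+1) = r * (u * (κ * u ^ k)) := by ring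
      rw [e2]
      abel

theorem BKD.fpow (H : BKD α f g d I) (k : ℕ) (s : Fin (n+1) →₀ ℕ) :
    f ^ k * monomial s (1:ℂ) - g ^ k * monomial s (1:ℂ) ∈ bkF α (k * d + bkwt α s - 1) := by
  induction k with
  | zero => simp
  | succ k ih =>
    have hf : f ∈ bkF α d := by
      have := Submodule.add_mem _ (bkF_mono H.fg (by linarith : d - 1 ≤ d))
        (bkS_mono H.gH (by simp) : g ∈ bkF α d)
      simpa using this
    have e : f ^ (k+1) * monomial s (1:ℂ) - g ^ (k+1) * monomial s (1:ℂ) =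
      f * (f ^ k * monomial s (1:ℂ) - g ^ k * monomial s (1:ℂ)) +
        (f - g) * (g ^ k * monomial s (1:ℂ)) := by ring
    rw [e]
    apply Submodule.add_mem
    · exact bkF_mul hf ih (by push_cast; linarith)
    · exact bkF_mul H.fg (bkS_mono (H.gpow k s) (by simp) : _ ∈ bkF α (k * d + bkwt α s))
        (by push_cast; linarith)

theorem BKD.indep (H : BKD α f g d I) (c : {β // β ∈ I} → Polynomial ℂ)
    (hc : ∀ u, ∑ β : {β // β ∈ I}, Polynomial.aeval f (c β) * monomial β.1 (1:ℂ) ∈ bkW f u) :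
    ∀ k : ℕ, (∀ β j, (c β).coeff j ≠ 0 → j * d + bkwt α β.1 < k) → ∀ β, c β = 0 := by
  have hd := H.dpos
  intro k
  induction k with
  | zero =>
    intro h β
    ext j
    by_contra h'
    have h1 := h β j (by simpa using h')
    have h2 := bkwt_nonneg α β.1
    have : 0 ≤ (j:ℤ) * d := by positivity
    push_cast at h1
    linarith
  | succ k ih =>
    intro h
    apply ih
    choose κ hκ hL using fun β j => H.lead β j
    let p : {β // β ∈ I} → Polynomial ℂ := fun β =>
      ∑ j ∈ (c β).support, Polynomial.monomial j ((c β).coeff j * κ β j)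
    have hp : ∀ β j, (p β).coeff j = (c β).coeff j * κ β j := by
      intro β j
      simp only [p, Polynomial.finsetSum_coeff, Polynomial.coeff_monomial, Finset.sum_ite_eq',
        Polynomial.mem_support_iff]
      by_cases h : (c β).coeff j = 0 <;> simp [h]
    have L1 : bkL α f d I (k - 1) (fun u => ∑ β : {β // β ∈ I}, ∑ j ∈ (c β).support,
        (c β).coeff j • ((g ^ j * monomial β.1 (1:ℂ) - (κ β j * u ^ j) • monomial β.1 (1:ℂ))
          + (f ^ j * monomial β.1 (1:ℂ) - g ^ j * monomial β.1 (1:ℂ)))) := by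
      apply bkL_sum
      intro β _
      apply bkL_sum
      intro j hj
      apply bkL_smul
      have h1 := h β j (Polynomial.mem_support_iff.1 hj)
      push_cast at h1
      exact bkL_mono (bkL_add (hL β j) (H.red' _ _ (H.fpow j β.1))) (by linarith)
    obtain ⟨q, hq1, hq2⟩ := L1
    have h0 : ∀ u β, (p β + q β).eval u = 0 := by
      intro u
      apply H.indW u
      have h2 := Submodule.sub_mem _ (hc u) (hq2 u)
      convert h2 using 1
      rw [← sub_add, ← Finset.sum_sub_distrib, ← Finset.sum_add_distrib]
      apply Finset.sum_congr rfl
      intro β _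
      rw [Polynomial.eval_add, add_smul]
      congr 1
      rw [Polynomial.aeval_def, Polynomial.eval₂_eq_sum, Polynomial.sum, Finset.sum_mul,
        ← Finset.sum_sub_distrib, Polynomial.eval_finsetSum, Finset.sum_smul]
      apply Finset.sum_congr rfl
      intro j _
      rw [Polynomial.eval_monomial]
      simp only [MvPolynomial.smul_eq_C_mul, MvPolynomial.algebraMap_eq, map_mul]
      ring
    intro β j hj
    have h1 := h β j hj
    push_cast at h1
    have hpq : p β + q β = 0 := Polynomial.funext (fun u => by simpa using h0 u β)
    have h3 : (q β).coeff j ≠ 0 := by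
      intro h4
      have h5 := congrArg (fun P => Polynomial.coeff P j) hpq
      simp only [Polynomial.coeff_add, hp, h4, add_zero, Polynomial.coeff_zero, mul_eq_zero] at h5
      rcases h5 with h5 | h5
      · exact hj h5
      · exact hκ β j h5
    have := hq1 β j h3
    linarith


/-- the subspace `J` -/
noncomputable def bkJ (f : MvPolynomial (Fin (n+1)) ℂ) : Submodule ℂ (MvPolynomial (Fin (n+1)) ℂ) :=
  Submodule.span ℂ
      {P : MvPolynomial (Fin (n + 1)) ℂ |
        ∃ (h : MvPolynomial (Fin (n + 1)) ℂ) (i j : Fin (n + 1)), i < j ∧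
          P = pderiv i f * pderiv j h - pderiv j f * pderiv i h}

theorem bkJ_gen (i j : Fin (n+1)) (h : MvPolynomial (Fin (n+1)) ℂ) :
    pderiv i f * pderiv j h - pderiv j f * pderiv i h ∈ bkJ f := by
  rcases lt_trichotomy i j with h1 | h1 | h1
  · exact Submodule.subset_span ⟨h, i, j, h1, rfl⟩
  · subst h1; simp
  · rw [← neg_sub]
    exact neg_mem (Submodule.subset_span ⟨h, j, i, h1, rfl⟩)

theorem bkJ_mul (P : MvPolynomial (Fin (n+1)) ℂ) (hP : P ∈ bkJ f) : f * P ∈ bkJ f := by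
  have : bkJ f ≤ (bkJ f).comap (LinearMap.mulLeft ℂ f) := by
    conv_lhs => rw [bkJ]
    rw [Submodule.span_le]
    rintro _ ⟨h, i, j, hij, rfl⟩
    change f * _ ∈ bkJ f
    have := bkJ_gen (f := f) i j (f * h)
    convert this using 1
    rw [pderiv_mul, pderiv_mul]
    ring
  exact this hP

theorem bkJ_le_W (u : ℂ) : bkJ f ≤ bkW f u := by
  classical
  rw [bkJ, Submodule.span_le]
  rintro _ ⟨h, i, j, hij, rfl⟩
  refine bkW_mem.2 ⟨Pi.single i (pderiv j h) - Pi.single j (pderiv i h), ?_⟩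
  have key : ∀ (k : Fin (n+1)) (P : MvPolynomial (Fin (n+1)) ℂ),
      ∑ l, bkD f u l ((Pi.single k P : Fin (n+1) → MvPolynomial (Fin (n+1)) ℂ) l) = bkD f u k P := by
    intro k P
    rw [Finset.sum_eq_single k]
    · simp
    · intro l _ hl
      simp [hl]
    · simp
  simp only [Pi.sub_apply, map_sub, Finset.sum_sub_distrib, key]
  simp only [bkD_apply, bk_pderiv_comm i j]
  abel

theorem bk_poincare (hn : 1 ≤ n) (a : Fin (n+1) → MvPolynomial (Fin (n+1)) ℂ)
    (ha : ∑ i, pderiv i (a i) = 0) : ∑ i, a i * pderiv i f ∈ bkJ f := by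
  have hex : ∀ i : Fin n, ∃ h, pderiv 0 h = a i.succ := by
    intro i
    obtain ⟨h, h1, _⟩ := bk_antideriv 0 i.succ (Fin.succ_ne_zero i).symm (a i.succ)
    exact ⟨h, h1⟩
  choose h hh using hex
  let c := a 0 + ∑ i : Fin n, pderiv i.succ (h i)
  have hc : pderiv 0 c = 0 := by
    rw [Fin.sum_univ_succ] at ha
    simp only [c, map_add, map_sum, bk_pderiv_comm 0, hh]
    exact ha
  let j : Fin (n+1) := ⟨1, by omega⟩
  obtain ⟨h', h1, h2⟩ := bk_antideriv j 0 (by simp [j, Fin.ext_iff]) c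
  have e : ∑ i, a i * pderiv i f =
      ∑ i : Fin n, (pderiv i.succ f * pderiv 0 (h i) - pderiv 0 f * pderiv i.succ (h i))
      + (pderiv 0 f * pderiv j h' - pderiv j f * pderiv 0 h') := by
    rw [h1, h2 hc, Fin.sum_univ_succ, Finset.sum_sub_distrib, ← Finset.mul_sum]
    simp only [hh, c]
    simp only [mul_comm (a _)]
    ring
  rw [e]
  exact Submodule.add_mem _ (sum_mem fun i _ => bkJ_gen _ _ _) (bkJ_gen _ _ _)

theorem BKD.spanJ (H : BKD α f g d I) : ∀ k : ℕ, ∀ m : ℤ, m < k → ∀ P ∈ bkF α m,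
    ∃ c : {β // β ∈ I} → Polynomial ℂ,
      P - ∑ β, Polynomial.aeval f (c β) * monomial β.1 (1:ℂ) ∈ bkJ f := by
  intro k
  induction k with
  | zero =>
    intro m hm P hP
    rw [bkF_neg hP (by simpa using hm)]
    exact ⟨0, by simp⟩
  | succ k ih =>
    intro m hm P hP
    have hd := H.dpos
    push_cast at hm
    obtain ⟨c, a, h1, h2, h3⟩ := H.divisionF m P hP
    have hdiv : ∑ i, pderiv i (a i) ∈ bkF α (m - d) :=
      sum_mem (fun i _ => bkF_pderiv (h2 i) i (by linarith))
    have hαs : 0 < ∑ i, α i := Finset.sum_pos (fun i _ => H.αpos i) Finset.univ_nonempty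
    obtain ⟨b, hb, hbe⟩ := bk_euler_inv hαs (m - d) _ hdiv
    have hJ := bk_poincare (f := f) H.hn (fun i => a i - (α i : ℂ) • (X i * b)) (by
      simp only [map_sub, Finset.sum_sub_distrib, hbe, sub_self])
    let E := ∑ i, a i * (pderiv i f - pderiv i g) +
      ((d:ℂ) • ((f - g) * b) - ∑ i, (α i : ℂ) • (X i * (pderiv i f - pderiv i g)) * b)
    have hE : E ∈ bkF α (m - 1) := by
      apply Submodule.add_mem
      · apply sum_mem
        intro i _
        exact bkF_mul (h2 i) (H.fgi i) (by linarith)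
      · apply Submodule.sub_mem
        · apply Submodule.smul_mem
          exact bkF_mul H.fg hb (by linarith)
        · apply sum_mem
          intro i _
          apply bkF_mul (a := d - 1) _ hb (by linarith)
          apply Submodule.smul_mem
          apply bkF_mul (a := α i) _ (H.fgi i) (by linarith)
          exact bkS_monomial _ _ (by simp [bkwt_single])
    obtain ⟨c1, hc1⟩ := ih (m - 1) (by linarith) _ hE
    obtain ⟨c2, hc2⟩ := ih (m - d) (by linarith) _ hb
    refine ⟨fun β => Polynomial.C (c β) - c1 β + Polynomial.C (d:ℂ) * (Polynomial.X * c2 β), ?_⟩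
    have h4 := Submodule.add_mem _ (Submodule.sub_mem _ hJ hc1)
      (Submodule.smul_mem _ (d:ℂ) (bkJ_mul _ hc2))
    convert h4 using 1
    have eu : (d:ℂ) • (g * b) = ∑ i, (α i : ℂ) • (X i * pderiv i g) * b := by
      rw [← Finset.sum_mul, bk_euler H.gH, smul_mul_assoc]
    have e0 : ∑ β : {β // β ∈ I}, Polynomial.aeval f (Polynomial.C (c β) - c1 β +
          Polynomial.C (d:ℂ) * (Polynomial.X * c2 β)) * monomial β.1 (1:ℂ) =
        ∑ β, c β • monomial β.1 (1:ℂ) -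
        ∑ β : {β // β ∈ I}, Polynomial.aeval f (c1 β) * monomial β.1 (1:ℂ) +
        (d:ℂ) • (f * ∑ β : {β // β ∈ I}, Polynomial.aeval f (c2 β) * monomial β.1 (1:ℂ)) := by
      rw [Finset.mul_sum, Finset.smul_sum, ← Finset.sum_sub_distrib, ← Finset.sum_add_distrib]
      apply Finset.sum_congr rfl
      intro β _
      simp only [map_add, map_sub, map_mul, Polynomial.aeval_C, Polynomial.aeval_X,
        MvPolynomial.smul_eq_C_mul, MvPolynomial.algebraMap_eq]
      ring
    rw [e0, h3]
    have e1 : ∑ i, (a i - (α i : ℂ) • (X i * b)) * pderiv i f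
        = ∑ i, a i * pderiv i g + E - (d:ℂ) • (f * b) := by
      have e2 : E = ∑ i, a i * (pderiv i f - pderiv i g) + (d:ℂ) • (f * b)
          - ∑ i, (α i : ℂ) • (X i * pderiv i f) * b := by
        simp only [E, sub_mul, smul_sub, mul_sub, Finset.sum_sub_distrib, ← eu]
        abel
      rw [e2]
      simp only [sub_mul, mul_sub, Finset.sum_sub_distrib]
      have e3 : ∑ i, (α i : ℂ) • (X i * pderiv i f) * b = ∑ i, (α i : ℂ) • (X i * b) * pderiv i f := by
        apply Finset.sum_congr rfl
        intro i _
        simp only [MvPolynomial.smul_eq_C_mul]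
        ring
      rw [e3]
      abel
    rw [e1, mul_sub, smul_sub]
    abel

theorem BKD.final (H : BKD α f g d I) (v : MvPolynomial (Fin (n + 1)) ℂ ⧸ bkJ f) :
      ∃! c : {β // β ∈ I} → Polynomial ℂ,
        v = ∑ β ∈ I.attach, Submodule.Quotient.mk
          (Polynomial.aeval f (c β) * monomial (β : Fin (n + 1) →₀ ℕ) (1 : ℂ)) := by
  have hsum : ∀ c : {β // β ∈ I} → Polynomial ℂ,
      (∑ β ∈ I.attach, Submodule.Quotient.mk
          (Polynomial.aeval f (c β) * monomial (β : Fin (n + 1) →₀ ℕ) (1 : ℂ)) :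
        MvPolynomial (Fin (n + 1)) ℂ ⧸ bkJ f) =
      Submodule.Quotient.mk (∑ β : {β // β ∈ I}, Polynomial.aeval f (c β) * monomial β.1 (1:ℂ)) := by
    intro c
    exact (map_sum (bkJ f).mkQ _ _).symm
  simp only [hsum]
  obtain ⟨P, rfl⟩ := Submodule.Quotient.mk_surjective _ v
  obtain ⟨m, hm⟩ := bkF_exists α P
  obtain ⟨c, hc⟩ := H.spanJ (m+1) m (by push_cast; linarith) P hm
  refine ⟨c, (Submodule.Quotient.eq _).2 hc, ?_⟩
  intro c' hc'
  have hc'' := (Submodule.Quotient.eq _).1 hc'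
  have hdiff := Submodule.sub_mem _ hc hc''
  have e : (P - ∑ β : {β // β ∈ I}, Polynomial.aeval f (c β) * monomial β.1 (1:ℂ)) -
      (P - ∑ β : {β // β ∈ I}, Polynomial.aeval f (c' β) * monomial β.1 (1:ℂ)) =
      ∑ β : {β // β ∈ I}, Polynomial.aeval f (c' β - c β) * monomial β.1 (1:ℂ) := by
    simp only [map_sub, sub_mul, Finset.sum_sub_distrib]
    abel
  rw [e] at hdiff
  have hbound : ∃ k : ℕ, ∀ (β : {β // β ∈ I}) (j : ℕ), (c' β - c β).coeff j ≠ 0 →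
      j * d + bkwt α β.1 < k := by
    let k := ∑ β : {β // β ∈ I}, ∑ j ∈ (c' β - c β).support, (j * d + bkwt α β.1)
    have hnn : ∀ (β : {β // β ∈ I}) (j : ℕ), 0 ≤ j * d + bkwt α β.1 := by
      intro β j
      have := H.dpos
      have := bkwt_nonneg α β.1
      positivity
    refine ⟨k.toNat + 1, fun β j hj => ?_⟩
    have h1 : j * d + bkwt α β.1 ≤ k := by
      refine le_trans ?_ (Finset.single_le_sum (f := fun β : {β // β ∈ I} =>
        ∑ j ∈ (c' β - c β).support, (j * d + bkwt α β.1))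
        (fun β _ => Finset.sum_nonneg (fun j _ => hnn β j)) (Finset.mem_univ β))
      exact Finset.single_le_sum (f := fun j : ℕ => j * d + bkwt α β.1)
        (fun j _ => hnn β j) (Polynomial.mem_support_iff.2 hj)
    have := Int.self_le_toNat k
    push_cast
    linarith
  obtain ⟨k, hk⟩ := hbound
  have := H.indep (fun β => c' β - c β) (fun u => bkJ_le_W u hdiff) k hk
  funext β
  exact sub_eq_zero.1 (this β)
end Main

/-- Let `f` be strongly tame and `J ⊆ ℂ[x]` the ℂ-linear span of the
polynomials `(∂f/∂xᵢ)(∂h/∂xⱼ) - (∂f/∂xⱼ)(∂h/∂xᵢ)`, `h ∈ ℂ[x]`, `i < j` (the coefficients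
of the forms in `df ∧ dΩ^{n-1}`).  Then `J` is stable under multiplication by `f`, so
`ℂ[x]/J` is a `ℂ[t]`-module with `t` acting as multiplication by `f`, and the classes of
the monomials `x^β`, `β ∈ I`, form a basis of `ℂ[x]/J` as a free `ℂ[t]`-module of rank
`μ = #I`: every class has a unique representation `Σ_{β∈I} c_β(f)·x^β` with
`c_β ∈ ℂ[t]`.  (This says the forms `ω_β = x^β dx` freely generate the Brieskorn module
`H'' = Ω^{n+1}/(df ∧ dΩ^{n-1})` over `ℂ[t]`.) -/
theorem brieskorn_Hpp_free
    (n : ℕ) (hn : 1 ≤ n) (α : Fin (n + 1) → ℕ)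
    (hαpos : ∀ i, 0 < α i) (hα : Finset.univ.gcd α = 1)
    (f : MvPolynomial (Fin (n + 1)) ℂ) (d : ℕ)
    (hd : MvPolynomial.weightedTotalDegree α f = d)
    (g : MvPolynomial (Fin (n + 1)) ℂ)
    (hg : g = weightedHomogeneousComponent α d f)
    (hg0 : g ≠ 0)
    (htame : ∀ x : Fin (n + 1) → ℂ, (∀ i, eval x (pderiv i g) = 0) → x = 0)
    (I : Finset (Fin (n + 1) →₀ ℕ))
    (hIindep : LinearIndependent ℂ (fun β : I =>
      Ideal.Quotient.mk (Ideal.span (Set.range fun i => pderiv i g))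
        (monomial (β : Fin (n + 1) →₀ ℕ) (1 : ℂ))))
    (hIspan : Submodule.span ℂ (Set.range fun β : I =>
      Ideal.Quotient.mk (Ideal.span (Set.range fun i => pderiv i g))
        (monomial (β : Fin (n + 1) →₀ ℕ) (1 : ℂ))) = ⊤)
    (J : Submodule ℂ (MvPolynomial (Fin (n + 1)) ℂ))
    (hJ : J = Submodule.span ℂ
      {P : MvPolynomial (Fin (n + 1)) ℂ |
        ∃ (h : MvPolynomial (Fin (n + 1)) ℂ) (i j : Fin (n + 1)), i < j ∧
          P = pderiv i f * pderiv j h - pderiv j f * pderiv i h}) :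
    (∀ P ∈ J, f * P ∈ J) ∧
    ∀ v : MvPolynomial (Fin (n + 1)) ℂ ⧸ J,
      ∃! c : {β // β ∈ I} → Polynomial ℂ,
        v = ∑ β ∈ I.attach, Submodule.Quotient.mk
          (Polynomial.aeval f (c β) * monomial (β : Fin (n + 1) →₀ ℕ) (1 : ℂ)) := by
  have hgH : g ∈ bkS α {(d:ℤ)} := by
    intro s hs
    rw [hg, coeff_weightedHomogeneousComponent] at hs
    split_ifs at hs with h
    · simp [bkwt, h]
    · exact absurd rfl hs
  have H : BKD α f g (d:ℤ) I := by
    refine ⟨hn, hαpos, ?_, hgH, ?_, ?_, ?_⟩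
    · by_contra h
      have hd0 : (d:ℤ) = 0 := by omega
      rw [hd0] at hgH
      have h1 := htame (fun _ => 1) (fun i => by
        have h2 : pderiv i g ∈ bkF α (0 - α i) := bkS_pderiv hgH i (by simp)
        rw [bkF_neg h2 (by have := hαpos i; omega)]
        simp)
      have h3 := congrFun h1 0
      simp at h3
    · intro s hs
      rw [hg, coeff_sub, coeff_weightedHomogeneousComponent] at hs
      split_ifs at hs with h
      · simp at hs
      · have h1 := le_weightedTotalDegree α (φ := f) (d := s)
          (mem_support_iff.2 (by simpa using hs))
        rw [hd] at h1
        simp only [bkwt, Set.mem_Iic]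
        omega
    · intro P
      have h1 : Ideal.Quotient.mk (Ideal.span (Set.range fun i => pderiv i g)) P ∈
        Submodule.span ℂ (Set.range fun β : I =>
          Ideal.Quotient.mk (Ideal.span (Set.range fun i => pderiv i g))
            (monomial (β : Fin (n + 1) →₀ ℕ) (1 : ℂ))) := by rw [hIspan]; trivial
      rw [Submodule.mem_span_range_iff_exists_fun] at h1
      obtain ⟨c, hc⟩ := h1
      have h2 : P - ∑ β : {β // β ∈ I}, c β • monomial β.1 (1:ℂ) ∈
          Ideal.span (Set.range fun i => pderiv i g) := by
        rw [← Ideal.Quotient.eq, ← hc]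
        exact (map_sum (Ideal.Quotient.mkₐ ℂ (Ideal.span (Set.range fun i => pderiv i g)))
          (fun β : {β // β ∈ I} => c β • monomial β.1 (1:ℂ)) _).symm
      obtain ⟨a, ha⟩ := Ideal.mem_span_range_iff_exists_fun.1 h2
      exact ⟨c, a, by rw [ha]; abel⟩
    · intro c a h
      apply Fintype.linearIndependent_iff.1 hIindep c
      have h1 : ∑ β : {β // β ∈ I}, c β • monomial β.1 (1:ℂ) ∈
          Ideal.span (Set.range fun i => pderiv i g) := by
        rw [h]
        exact Ideal.mem_span_range_iff_exists_fun.2 ⟨a, rfl⟩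
      rw [← Ideal.Quotient.eq_zero_iff_mem] at h1
      rw [← h1]
      exact (map_sum (Ideal.Quotient.mkₐ ℂ (Ideal.span (Set.range fun i => pderiv i g)))
          (fun β : {β // β ∈ I} => c β • monomial β.1 (1:ℂ)) _).symm
  have hJ' : J = bkJ f := hJ
  clear hJ
  subst hJ'
  exact ⟨fun P hP => bkJ_mul P hP, H.final⟩
end
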